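/- arXiv:2601.17524 — 13 statements merged into one kernel-verified Lean document; each statement's English description precedes it below -/
import Mathlib

section
/- Let K be a number field and 𝔫 a nonzero ideal of its ring of integers. Two eigensystems λ₁ = (α₁, χ₁) and λ₂ = (α₂, χ₂) of level 𝔫 agree on all principal Hecke operators — that is, χ₁(𝔞)α₁(𝔟) = χ₂(𝔞)α₂(𝔟) for every nonzero ideal 𝔞 coprime to 𝔫 and every nonzero ideal 𝔟 such that the ideal 𝔞²𝔟 is principal — if and only if there exists an unramified character ψ : Cl(K) → ℂˣ such that λ₂ = λ₁ ⊗ ψ, i.e. α₂(𝔟) = ψ([𝔟])·α₁(𝔟) for every nonzero ideal 𝔟 and χ₂(𝔞) = ψ([𝔞])²·χ₁(𝔞) for every nonzero ideal 𝔞 coprime to 𝔫. -/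
/-!
The Hecke algebra acts through operators with eigenvalues `χ(a)α(b)`, and giving such an operator
the degree `[a]²[b]` makes it an algebra graded by the class group; the operators of trivial degree
are the principal ones. Two eigensystems are two algebra homomorphisms to `ℂ`, and the claim is an
instance of a general fact: two characters of an algebra graded by a finite abelian group `G` that
agree in degree `1` differ by a character of `G`.

Instead of the Hecke algebra itself, the proof uses its image in `ℂ × ℂ` under the pair of
eigensystems: `heckeSpan g` is the span of the pairs `(χ₁(a)α₁(b), χ₂(a)α₂(b))` of degree `g`.
The Hecke relations show that `heckeSpan g * heckeSpan h ⊆ heckeSpan (g * h)`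
(`mul_mem_heckeSpan`); the essential case is multiplication by `α(p)` for a prime `p`
(`raisesDegree_alphaPair_prime`), from which prime powers and then all ideals follow.

If the eigensystems agree on principal operators, `heckeSpan 1` is diagonal. For `x` of degree `g`,
a power of `x` has degree `1`, so the two coordinates of `x` vanish together. The degrees carrying a
nonvanishing element form a subgroup `H` of the class group, on which the ratio of coordinates is a
well-defined character; it extends from `H` to the class group
(`exists_character_of_graded`). The converse is immediate, as `ψ([a]²[b]) = 1` when `a²b` is
principal.
-/

open NumberField

/-- An eigensystem of level `n` over a number field `K`: a pair `(α, χ)` of complex-valued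
functions on nonzero ideals (with `χ` nonvanishing on ideals coprime to `n`), satisfying the
formal multiplicative relations of Hecke eigenvalue systems. -/
structure Eigensystem (K : Type*) [Field K] [NumberField K] (n : Ideal (𝓞 K)) where
  α : Ideal (𝓞 K) → ℂ
  χ : Ideal (𝓞 K) → ℂ
  chi_ne_zero : ∀ a : Ideal (𝓞 K), a ≠ 0 → IsCoprime a n → χ a ≠ 0
  alpha_one : α 1 = 1
  chi_one : χ 1 = 1
  chi_mul : ∀ a b : Ideal (𝓞 K), a ≠ 0 → b ≠ 0 → IsCoprime a n → IsCoprime b n →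
    χ (a * b) = χ a * χ b
  alpha_mul : ∀ a b : Ideal (𝓞 K), a ≠ 0 → b ≠ 0 → IsCoprime a b →
    α (a * b) = α a * α b
  alpha_pow : ∀ p : Ideal (𝓞 K), p.IsPrime → p ≠ 0 → p ∣ n →
    ∀ k : ℕ, 1 ≤ k → α (p ^ k) = (α p) ^ k
  alpha_rec : ∀ p : Ideal (𝓞 K), p.IsPrime → p ≠ 0 → ¬ p ∣ n →
    ∀ k : ℕ, 1 ≤ k →
      α (p ^ k) * α p = α (p ^ (k + 1)) + (Ideal.absNorm p : ℂ) * α (p ^ (k - 1)) * χ p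

/-- The ideal class of a nonzero ideal. -/
noncomputable def idealClass {K : Type*} [Field K] [NumberField K]
    (b : Ideal (𝓞 K)) (hb : b ≠ 0) : ClassGroup (𝓞 K) :=
  ClassGroup.mk0 ⟨b, mem_nonZeroDivisors_iff_ne_zero.mpr hb⟩

/-! ### Characters from multiplicative families of pairs -/

/-- A family `M` of sets of pairs indexed by a finite abelian group `G`, multiplicative in the
grading and diagonal in degree `1`, lies on the lines of slope `ψ g` for some character `ψ`.

The degrees in which some first coordinate is nonzero form a subgroup; there the slope is forced and
multiplicative, and the resulting character extends to `G` because `ℂ` has enough roots of unity.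
In the other degrees both coordinates vanish, since a suitable power lands in degree `1`. -/
lemma exists_character_of_graded {G : Type*} [CommGroup G] [Finite G] (M : G → Set (ℂ × ℂ))
    (h_one : (1 : ℂ × ℂ) ∈ M 1)
    (h_mul : ∀ g h x y, x ∈ M g → y ∈ M h → x * y ∈ M (g * h))
    (h_diag : ∀ x ∈ M 1, x.1 = x.2) :
    ∃ ψ : G →* ℂˣ, ∀ g, ∀ x ∈ M g, x.2 = (ψ g : ℂ) * x.1 := by
  have h_pow : ∀ g x, x ∈ M g → ∀ k : ℕ, x ^ k ∈ M (g ^ k) := by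
    intro g x hx k
    induction k with
    | zero => simpa using h_one
    | succ k ih => simpa [pow_succ] using h_mul _ _ _ _ ih hx
  have h_pow_eq : ∀ g x, x ∈ M g → x.1 ^ orderOf g = x.2 ^ orderOf g := by
    intro g x hx
    have h := h_pow g x hx (orderOf g)
    rw [pow_orderOf_eq_one] at h
    simpa using h_diag _ h
  have h_zero : ∀ g x, x ∈ M g → (x.1 = 0 ↔ x.2 = 0) := by
    intro g x hx
    have h := h_pow_eq g x hx
    have ho : orderOf g ≠ 0 := (orderOf_pos g).ne'
    rw [← pow_eq_zero_iff ho, h, pow_eq_zero_iff ho]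
  let H : Subgroup G :=
    { carrier := {g | ∃ x ∈ M g, x.1 ≠ 0}
      one_mem' := ⟨1, h_one, by simp⟩
      mul_mem' := by
        rintro g h ⟨x, hx, hx0⟩ ⟨y, hy, hy0⟩
        exact ⟨x * y, h_mul _ _ _ _ hx hy, mul_ne_zero hx0 hy0⟩
      inv_mem' := by
        rintro g ⟨x, hx, hx0⟩
        refine ⟨x ^ (orderOf g - 1), ?_, by simpa using pow_ne_zero _ hx0⟩
        have hg : g ^ (orderOf g - 1) = g⁻¹ := by
          rw [eq_inv_iff_mul_eq_one, ← pow_succ, Nat.sub_add_cancel (orderOf_pos g),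
            pow_orderOf_eq_one]
        exact hg ▸ h_pow g x hx _ }
  -- Multiplying by an element of degree `g⁻¹` with nonzero coordinates compares the slopes.
  have h_cross : ∀ g ∈ H, ∀ x ∈ M g, ∀ y ∈ M g, x.2 * y.1 = y.2 * x.1 := by
    intro g hg x hx y hy
    obtain ⟨z, hz, hz0⟩ := H.inv_mem hg
    have hxz := h_diag _ (by simpa using h_mul _ _ _ _ hx hz)
    have hyz := h_diag _ (by simpa using h_mul _ _ _ _ hy hz)
    simp only [Prod.fst_mul, Prod.snd_mul] at hxz hyz
    have hz2 : z.2 ≠ 0 := fun h => hz0 ((h_zero _ _ hz).2 h)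
    apply mul_right_cancel₀ hz2
    linear_combination x.1 * hyz - y.1 * hxz
  choose s hs hs0 using fun g : H => g.2
  have hs2 : ∀ g, (s g).2 ≠ 0 := fun g h => hs0 g ((h_zero _ _ (hs g)).2 h)
  let ψ₀ : H →* ℂˣ :=
    MonoidHom.mk' (fun g => Units.mk0 ((s g).2 / (s g).1) (div_ne_zero (hs2 g) (hs0 g))) <| by
      intro g h
      ext
      have hc := h_cross _ (g * h).2 _ (hs (g * h)) _ (h_mul _ _ _ _ (hs g) (hs h))
      have h1 := hs0 g
      have h2 := hs0 h
      have h3 := hs0 (g * h)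
      simp only [Prod.fst_mul, Prod.snd_mul] at hc
      simp only [Units.val_mk0, Units.val_mul]
      field_simp
      linear_combination hc
  have : NeZero (Monoid.exponent G) := ⟨Monoid.exponent_ne_zero_of_finite⟩
  obtain ⟨ψ, hψ⟩ := MonoidHom.domRestrict_surjective ℂ H ψ₀
  refine ⟨ψ, fun g x hx => ?_⟩
  by_cases hg : g ∈ H
  · have hv : ψ g = ψ₀ ⟨g, hg⟩ := by rw [← hψ]; rfl
    have hc := h_cross g hg x hx _ (hs ⟨g, hg⟩)
    have h1 := hs0 ⟨g, hg⟩
    rw [hv]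
    change x.2 = (s ⟨g, hg⟩).2 / (s ⟨g, hg⟩).1 * x.1
    field_simp
    linear_combination hc
  · have hx1 : x.1 = 0 := by
      by_contra h
      exact hg ⟨x, hx, h⟩
    rw [hx1, (h_zero g x hx).1 hx1, mul_zero]

/-! ### Ideals and ideal classes -/

section

variable {K : Type*} [Field K] [NumberField K]

lemma idealClass_mul (a b : Ideal (𝓞 K)) (ha : a ≠ 0) (hb : b ≠ 0) :
    idealClass (a * b) (mul_ne_zero ha hb) = idealClass a ha * idealClass b hb := by
  rw [idealClass, idealClass, idealClass, ← map_mul]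
  rfl

lemma idealClass_one : idealClass (1 : Ideal (𝓞 K)) one_ne_zero = 1 :=
  map_one ClassGroup.mk0

lemma idealClass_pow (a : Ideal (𝓞 K)) (ha : a ≠ 0) (k : ℕ) :
    idealClass (a ^ k) (pow_ne_zero k ha) = idealClass a ha ^ k := by
  rw [idealClass, idealClass, ← map_pow]
  rfl

lemma isPrincipal_iff_idealClass (a b : Ideal (𝓞 K)) (ha : a ≠ 0) (hb : b ≠ 0) :
    Submodule.IsPrincipal (a ^ 2 * b : Ideal (𝓞 K)) ↔
      idealClass a ha ^ 2 * idealClass b hb = 1 := by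
  rw [← idealClass_pow, ← idealClass_mul]
  exact (ClassGroup.mk0_eq_one_iff _).symm

lemma isCoprime_of_prime_not_dvd {p c : Ideal (𝓞 K)} (hp : Prime p) (h : ¬ p ∣ c) :
    IsCoprime p c := by
  rwa [Ideal.isCoprime_iff_gcd, hp.irreducible.gcd_eq_one_iff]

/-! ### The graded span of pairs of Hecke eigenvalues -/

variable {n : Ideal (𝓞 K)} (l₁ l₂ : Eigensystem K n)

/-- The pair of `α`-values of two eigensystems at an ideal, as an element of the ring `ℂ × ℂ`. -/
def alphaPair (b : Ideal (𝓞 K)) : ℂ × ℂ := (l₁.α b, l₂.α b)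

/-- The pair of `χ`-values of two eigensystems at an ideal, as an element of the ring `ℂ × ℂ`. -/
def chiPair (a : Ideal (𝓞 K)) : ℂ × ℂ := (l₁.χ a, l₂.χ a)

/-- The image in `ℂ × ℂ`, under the two eigensystems, of the degree-`g` part of the Hecke algebra
graded by the class group, where the operator with eigenvalue `χ(a)α(b)` has degree `[a]²[b]`. -/
def heckeSpan (g : ClassGroup (𝓞 K)) : Submodule ℂ (ℂ × ℂ) :=
  Submodule.span ℂ {x | ∃ (a b : Ideal (𝓞 K)) (ha : a ≠ 0) (hb : b ≠ 0), IsCoprime a n ∧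
    idealClass a ha ^ 2 * idealClass b hb = g ∧ x = chiPair l₁ l₂ a * alphaPair l₁ l₂ b}

/-- Multiplication by `x` raises the degree in the graded span by `h`. -/
def RaisesDegree (h : ClassGroup (𝓞 K)) (x : ℂ × ℂ) : Prop :=
  ∀ g, ∀ m ∈ heckeSpan l₁ l₂ g, x * m ∈ heckeSpan l₁ l₂ (h * g)

variable {l₁ l₂}

lemma mem_heckeSpan {g : ClassGroup (𝓞 K)} (a b : Ideal (𝓞 K)) (ha : a ≠ 0) (hb : b ≠ 0)
    (han : IsCoprime a n) (hg : idealClass a ha ^ 2 * idealClass b hb = g) :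
    chiPair l₁ l₂ a * alphaPair l₁ l₂ b ∈ heckeSpan l₁ l₂ g :=
  Submodule.subset_span ⟨a, b, ha, hb, han, hg, rfl⟩

lemma raisesDegree_of_generators {h : ClassGroup (𝓞 K)} {x : ℂ × ℂ}
    (H : ∀ (a b : Ideal (𝓞 K)) (ha : a ≠ 0) (hb : b ≠ 0), IsCoprime a n →
      x * (chiPair l₁ l₂ a * alphaPair l₁ l₂ b) ∈
        heckeSpan l₁ l₂ (h * (idealClass a ha ^ 2 * idealClass b hb))) :
    RaisesDegree l₁ l₂ h x := by
  intro g m hm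
  induction hm using Submodule.span_induction with
  | mem y hy =>
    obtain ⟨a, b, ha, hb, han, rfl, rfl⟩ := hy
    exact H a b ha hb han
  | zero => simp
  | add y z _ _ hy hz => rw [mul_add]; exact add_mem hy hz
  | smul c y _ hy => rw [mul_smul_comm]; exact Submodule.smul_mem _ c hy

lemma RaisesDegree.mul {g h : ClassGroup (𝓞 K)} {x y : ℂ × ℂ}
    (hx : RaisesDegree l₁ l₂ g x) (hy : RaisesDegree l₁ l₂ h y) :
    RaisesDegree l₁ l₂ (g * h) (x * y) := by
  intro k m hm
  rw [mul_assoc, mul_assoc]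
  exact hx _ _ (hy _ _ hm)

lemma RaisesDegree.sub {h : ClassGroup (𝓞 K)} {x y : ℂ × ℂ}
    (hx : RaisesDegree l₁ l₂ h x) (hy : RaisesDegree l₁ l₂ h y) :
    RaisesDegree l₁ l₂ h (x - y) := by
  intro k m hm
  rw [sub_mul]
  exact sub_mem (hx _ _ hm) (hy _ _ hm)

lemma RaisesDegree.smul {h : ClassGroup (𝓞 K)} {x : ℂ × ℂ} (c : ℂ)
    (hx : RaisesDegree l₁ l₂ h x) : RaisesDegree l₁ l₂ h (c • x) := by
  intro k m hm
  rw [smul_mul_assoc]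
  exact Submodule.smul_mem _ c (hx _ _ hm)

lemma raisesDegree_one : RaisesDegree l₁ l₂ 1 1 := by
  intro k m hm
  simpa using hm

lemma alphaPair_one : alphaPair l₁ l₂ 1 = 1 := by
  simp only [alphaPair, l₁.alpha_one, l₂.alpha_one, Prod.mk_one_one]

lemma chiPair_one : chiPair l₁ l₂ 1 = 1 := by
  simp only [chiPair, l₁.chi_one, l₂.chi_one, Prod.mk_one_one]

lemma alphaPair_mul {a b : Ideal (𝓞 K)} (ha : a ≠ 0) (hb : b ≠ 0) (h : IsCoprime a b) :
    alphaPair l₁ l₂ (a * b) = alphaPair l₁ l₂ a * alphaPair l₁ l₂ b := by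
  simp [alphaPair, l₁.alpha_mul a b ha hb h, l₂.alpha_mul a b ha hb h]

lemma chiPair_mul {a b : Ideal (𝓞 K)} (ha : a ≠ 0) (hb : b ≠ 0) (han : IsCoprime a n)
    (hbn : IsCoprime b n) :
    chiPair l₁ l₂ (a * b) = chiPair l₁ l₂ a * chiPair l₁ l₂ b := by
  simp [chiPair, l₁.chi_mul a b ha hb han hbn, l₂.chi_mul a b ha hb han hbn]

lemma alphaPair_pow_succ_of_dvd {p : Ideal (𝓞 K)} (hp : Prime p) (hpn : p ∣ n) (k : ℕ) :
    alphaPair l₁ l₂ (p ^ (k + 1)) = alphaPair l₁ l₂ (p ^ k) * alphaPair l₁ l₂ p := by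
  have h (l : Eigensystem K n) : l.α (p ^ (k + 1)) = l.α (p ^ k) * l.α p := by
    have hP := Ideal.isPrime_of_prime hp
    rcases Nat.eq_zero_or_pos k with rfl | hk
    · rw [pow_zero, l.alpha_one, zero_add, pow_one, one_mul]
    · rw [l.alpha_pow p hP hp.ne_zero hpn _ (by omega), l.alpha_pow p hP hp.ne_zero hpn k hk,
        pow_succ]
  simp [alphaPair, h]

lemma alphaPair_rec {p : Ideal (𝓞 K)} (hp : Prime p) (hpn : ¬ p ∣ n) (k : ℕ) :
    alphaPair l₁ l₂ (p ^ (k + 1)) * alphaPair l₁ l₂ p = alphaPair l₁ l₂ (p ^ (k + 2)) +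
      (Ideal.absNorm p : ℂ) • (alphaPair l₁ l₂ (p ^ k) * chiPair l₁ l₂ p) := by
  have h (l : Eigensystem K n) := l.alpha_rec p (Ideal.isPrime_of_prime hp) hp.ne_zero hpn
    (k + 1) (by omega)
  simp only [Nat.add_sub_cancel, mul_assoc] at h
  ext <;> simp [alphaPair, chiPair, h]

lemma raisesDegree_chiPair (c : Ideal (𝓞 K)) (hc : c ≠ 0) (hcn : IsCoprime c n) :
    RaisesDegree l₁ l₂ (idealClass c hc ^ 2) (chiPair l₁ l₂ c) := by
  refine raisesDegree_of_generators fun a b ha hb han => ?_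
  rw [← mul_assoc (chiPair l₁ l₂ c), ← chiPair_mul hc ha hcn han]
  refine mem_heckeSpan _ _ (mul_ne_zero hc ha) hb (hcn.mul_left han) ?_
  rw [idealClass_mul c a hc ha, mul_pow, mul_assoc]

/-- Writing `b = p ^ k * c` with `p ∤ c`, the product `α(p)α(b)` is expanded by the relations at
`p`: it is `α(pb)`, with a correction term `N(p)χ(p)α(b/p)` when `p ∤ n` and `k ≥ 1`. -/
lemma raisesDegree_alphaPair_prime {p : Ideal (𝓞 K)} (hp : Prime p) :
    RaisesDegree l₁ l₂ (idealClass p hp.ne_zero) (alphaPair l₁ l₂ p) := by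
  refine raisesDegree_of_generators fun a b ha hb han => ?_
  obtain ⟨c, hbc, hpc⟩ := (FiniteMultiplicity.of_prime_left hp hb).exists_eq_pow_mul_and_not_dvd
  generalize multiplicity p b = k at hbc
  subst hbc
  have hc : c ≠ 0 := right_ne_zero_of_mul hb
  have hp0 := hp.ne_zero
  have hcop : IsCoprime p c := isCoprime_of_prime_not_dvd hp hpc
  have hα (j : ℕ) : alphaPair l₁ l₂ (p ^ j * c) = alphaPair l₁ l₂ (p ^ j) * alphaPair l₁ l₂ c :=
    alphaPair_mul (pow_ne_zero j hp0) hc hcop.pow_left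
  have hcl (j : ℕ) (hj : p ^ j * c ≠ 0) :
      idealClass (p ^ j * c) hj = idealClass p hp0 ^ j * idealClass c hc := by
    rw [idealClass_mul _ _ (pow_ne_zero j hp0) hc, idealClass_pow]
  have main : chiPair l₁ l₂ a * alphaPair l₁ l₂ (p ^ (k + 1) * c) ∈ heckeSpan l₁ l₂
      (idealClass p hp0 * (idealClass a ha ^ 2 * idealClass (p ^ k * c) hb)) := by
    refine mem_heckeSpan _ _ ha (mul_ne_zero (pow_ne_zero _ hp0) hc) han ?_
    rw [hcl, hcl, pow_succ' _ k]
    ac_rfl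
  by_cases hpn : p ∣ n
  · convert main using 1
    rw [hα, hα, alphaPair_pow_succ_of_dvd hp hpn]
    ring
  · cases k with
    | zero =>
      convert main using 1
      rw [hα, hα]
      simp only [pow_zero, zero_add, pow_one, alphaPair_one]
      ring
    | succ k =>
      have hpn' : IsCoprime p n := isCoprime_of_prime_not_dvd hp hpn
      have corr : chiPair l₁ l₂ (a * p) * alphaPair l₁ l₂ (p ^ k * c) ∈ heckeSpan l₁ l₂
          (idealClass p hp0 * (idealClass a ha ^ 2 * idealClass (p ^ (k + 1) * c) hb)) := by
        refine mem_heckeSpan _ _ (mul_ne_zero ha hp0) (mul_ne_zero (pow_ne_zero _ hp0) hc)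
          (han.mul_left hpn') ?_
        rw [hcl, hcl, idealClass_mul _ _ ha hp0, mul_pow, pow_succ' _ k, sq (idealClass p hp0)]
        generalize idealClass a ha ^ 2 = A, idealClass p hp0 ^ k = B
        ac_rfl
      convert add_mem main (Submodule.smul_mem _ (Ideal.absNorm p : ℂ) corr) using 1
      rw [hα, hα, hα, chiPair_mul ha hp0 han hpn']
      have h := alphaPair_rec (l₁ := l₁) (l₂ := l₂) hp hpn k
      rw [Algebra.smul_def] at h ⊢
      linear_combination chiPair l₁ l₂ a * alphaPair l₁ l₂ c * h

lemma raisesDegree_alphaPair_prime_pow {p : Ideal (𝓞 K)} (hp : Prime p) (k : ℕ) :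
    RaisesDegree l₁ l₂ (idealClass p hp.ne_zero ^ k) (alphaPair l₁ l₂ (p ^ k)) := by
  have h1 := raisesDegree_alphaPair_prime (l₁ := l₁) (l₂ := l₂) hp
  by_cases hpn : p ∣ n
  · induction k with
    | zero => rw [pow_zero, pow_zero, alphaPair_one]; exact raisesDegree_one
    | succ k ih =>
      rw [alphaPair_pow_succ_of_dvd hp hpn, pow_succ]
      exact ih.mul h1
  · induction k using Nat.twoStepInduction with
    | zero => rw [pow_zero, pow_zero, alphaPair_one]; exact raisesDegree_one
    | one => simpa using h1
    | more k ih ih' =>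
      rw [← sub_eq_iff_eq_add.2 (alphaPair_rec hp hpn k)]
      refine RaisesDegree.sub ?_ (RaisesDegree.smul _ ?_)
      · rw [pow_succ _ (k + 1)]
        exact ih'.mul h1
      · rw [pow_add]
        exact ih.mul (raisesDegree_chiPair p hp.ne_zero (isCoprime_of_prime_not_dvd hp hpn))

lemma raisesDegree_alphaPair (b : Ideal (𝓞 K)) (hb : b ≠ 0) :
    RaisesDegree l₁ l₂ (idealClass b hb) (alphaPair l₁ l₂ b) := by
  induction b using UniqueFactorizationMonoid.induction_on_coprime with
  | h0 => exact absurd rfl hb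
  | h1 hx =>
    obtain rfl := isUnit_iff_eq_one.1 hx
    have h := raisesDegree_one (l₁ := l₁) (l₂ := l₂)
    rwa [← idealClass_one, ← alphaPair_one (l₁ := l₁) (l₂ := l₂)] at h
  | hpr i hp =>
    rw [idealClass_pow _ hp.ne_zero]
    exact raisesDegree_alphaPair_prime_pow hp i
  | hcp hxy hx hy =>
    have hx0 := left_ne_zero_of_mul hb
    have hy0 := right_ne_zero_of_mul hb
    rw [idealClass_mul _ _ hx0 hy0, alphaPair_mul hx0 hy0
      (Ideal.isCoprime_iff_gcd.2 ((gcd_isUnit_iff_isRelPrime.2 hxy) |> isUnit_iff_eq_one.1))]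
    exact (hx hx0).mul (hy hy0)

lemma mul_mem_heckeSpan {g h : ClassGroup (𝓞 K)} {x y : ℂ × ℂ} (hx : x ∈ heckeSpan l₁ l₂ g)
    (hy : y ∈ heckeSpan l₁ l₂ h) : x * y ∈ heckeSpan l₁ l₂ (g * h) := by
  induction hx using Submodule.span_induction with
  | mem x hx =>
    obtain ⟨a, b, ha, hb, han, rfl, rfl⟩ := hx
    exact (raisesDegree_chiPair a ha han).mul (raisesDegree_alphaPair b hb) _ _ hy
  | zero => simp
  | add x z _ _ hx hz => rw [add_mul]; exact add_mem hx hz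
  | smul c x _ hx => rw [smul_mul_assoc]; exact Submodule.smul_mem _ c hx

end

/-- Two eigensystems of level `n` agree on all principal Hecke operators if and only if they
differ by a twist by an unramified character `ψ : Cl(K) → ℂˣ`. -/
theorem eigensystems_agree_on_principal_iff_unramified_twist
    {K : Type*} [Field K] [NumberField K] (n : Ideal (𝓞 K)) (hn : n ≠ 0)
    (l₁ l₂ : Eigensystem K n) :
    (∀ a b : Ideal (𝓞 K), a ≠ 0 → b ≠ 0 → IsCoprime a n →
        Submodule.IsPrincipal (a ^ 2 * b : Ideal (𝓞 K)) →
        l₁.χ a * l₁.α b = l₂.χ a * l₂.α b)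
    ↔ ∃ ψ : ClassGroup (𝓞 K) →* ℂˣ,
        (∀ b : Ideal (𝓞 K), (hb : b ≠ 0) →
          l₂.α b = (ψ (idealClass b hb) : ℂ) * l₁.α b) ∧
        (∀ a : Ideal (𝓞 K), (ha : a ≠ 0) → IsCoprime a n →
          l₂.χ a = (ψ (idealClass a ha) : ℂ) ^ 2 * l₁.χ a) := by
  constructor
  · intro H
    obtain ⟨ψ, hψ⟩ := exists_character_of_graded (fun g => (heckeSpan l₁ l₂ g : Set (ℂ × ℂ)))
      (by
        have h := mem_heckeSpan (l₁ := l₁) (l₂ := l₂) 1 1 one_ne_zero one_ne_zero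
          isCoprime_one_left rfl
        rwa [chiPair_one, alphaPair_one, idealClass_one, one_pow, one_mul, one_mul] at h)
      (fun g h x y hx hy => mul_mem_heckeSpan hx hy)
      (by
        intro x hx
        induction hx using Submodule.span_induction with
        | mem x hx =>
          obtain ⟨a, b, ha, hb, han, hg, rfl⟩ := hx
          exact H a b ha hb han ((isPrincipal_iff_idealClass a b ha hb).2 hg)
        | zero => rfl
        | add x y _ _ hx hy => simp [hx, hy]
        | smul c x _ hx => simp [hx])
    refine ⟨ψ, fun b hb => ?_, fun a ha han => ?_⟩
    · have h := hψ _ _ (mem_heckeSpan (l₁ := l₁) (l₂ := l₂) 1 b one_ne_zero hb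
        isCoprime_one_left rfl)
      rwa [chiPair_one, idealClass_one, one_pow, one_mul, one_mul] at h
    · have h := hψ _ _ (mem_heckeSpan (l₁ := l₁) (l₂ := l₂) a 1 ha one_ne_zero han rfl)
      rwa [alphaPair_one, idealClass_one, mul_one, mul_one, map_pow, Units.val_pow_eq_pow_val] at h
  · rintro ⟨ψ, hα, hχ⟩ a b ha hb han hab
    have h := congrArg (fun g => (ψ g : ℂ)) ((isPrincipal_iff_idealClass a b ha hb).1 hab)
    simp only [map_mul, map_pow, map_one, Units.val_mul, Units.val_pow_eq_pow_val,
      Units.val_one] at h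
    rw [hα b hb, hχ a ha han]
    linear_combination -(l₁.χ a * l₁.α b) * h
end

section
/- Let G be a finite commutative group and let χ : G → ℂˣ be a group homomorphism such that χ(x) = 1 for every element x ∈ G with x² = 1. Then there exists a group homomorphism ψ : G → ℂˣ with χ = ψ², i.e. χ(x) = ψ(x)² for all x ∈ G. -/
/-- A character of a finite commutative group which is trivial on all 2-torsion elements is
the square of some character. -/
theorem exists_sqrt_of_trivial_on_two_torsion
    {G : Type*} [CommGroup G] [Finite G] (χ : G →* ℂˣ)
    (h : ∀ x : G, x ^ 2 = 1 → χ x = 1) :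
    ∃ ψ : G →* ℂˣ, ∀ x : G, χ x = (ψ x) ^ 2 := by
  let sq : G →* G := powMonoidHom 2
  have hker : sq.rangeRestrict.ker ≤ χ.ker := by
    intro x hx
    rw [MonoidHom.ker_rangeRestrict] at hx
    exact h x hx
  -- `χ` kills the kernel of squaring, so it factors as `x ↦ φ (x ^ 2)` through the squares.
  let φ : sq.range →* ℂˣ :=
    sq.rangeRestrict.liftOfSurjective sq.rangeRestrict_surjective ⟨χ, hker⟩
  have hφ (x : G) : φ (sq.rangeRestrict x) = χ x :=
    sq.rangeRestrict.liftOfRightInverse_comp_apply _ _ ⟨χ, hker⟩ x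
  -- Any extension `ψ` of `φ` from the subgroup of squares to `G` is a square root of `χ`.
  have : NeZero (Monoid.exponent G) := ⟨Monoid.exponent_ne_zero_of_finite⟩
  obtain ⟨ψ, hψ⟩ := MonoidHom.domRestrict_surjective ℂ sq.range φ
  refine ⟨ψ, fun x ↦ ?_⟩
  rw [← hφ, ← hψ, ← map_pow]
  rfl
end

section
/- Let G be a group and V a complex vector space with internal direct sum decomposition V = ⨁_{c ∈ G} V_c. Let ψ : G → ℂˣ be a group homomorphism. For v ∈ V define the twist v ⊗ ψ := Σ_c ψ(c)⁻¹·v_c (a finite sum over the finitely many nonzero components of v). If T : V → V is a linear map of class c₀ (i.e. T(V_c) ⊆ V_{c₀c} for all c) and T(v) = μ·v for some μ ∈ ℂ, then T(v ⊗ ψ) = ψ(c₀)·μ·(v ⊗ ψ). -/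
/-!
Since `T` has class `c₀`, it sends the `c`-component of `v` to the `c₀ * c`-component of
`T v = μ • v` (`decompose_apply_of_class`), so `T v_c = μ • v_{c₀ c}`. Applying `T` to the twist
termwise and using `ψ(c)⁻¹ = ψ(c₀) ψ(c₀ c)⁻¹`, the claim follows by reindexing the sum along
`c ↦ c₀ * c`.
-/

/-- An operator of class `c₀` carries the `c`-component of `w` to the `c₀ * c`-component of `T w`. -/
theorem decompose_apply_of_class
    {G : Type*} [Group G] [DecidableEq G] {V : Type*}
    [AddCommGroup V] [Module ℂ V] (Vc : G → Submodule ℂ V)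
    [DirectSum.Decomposition Vc] (c₀ : G) (T : V →ₗ[ℂ] V)
    (hT : ∀ c : G, ∀ x ∈ Vc c, T x ∈ Vc (c₀ * c)) (w : V) (c : G) :
    (DirectSum.decompose Vc (T w) (c₀ * c) : V) = T (DirectSum.decompose Vc w c : V) := by
  induction w using DirectSum.Decomposition.inductionOn Vc with
  | zero => simp
  | @homogeneous i m =>
    by_cases h : i = c
    · subst h
      rw [DirectSum.decompose_of_mem_same Vc (hT i m m.2),
        DirectSum.decompose_of_mem_same Vc m.2]
    · rw [DirectSum.decompose_of_mem_ne Vc (hT i m m.2) (fun e => h (mul_left_cancel e)),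
        DirectSum.decompose_of_mem_ne Vc m.2 h, map_zero]
  | add a b ha hb => simp [DirectSum.decompose_add, ha, hb]

/-- Twisting an eigenvector by a character: if `V = ⨁_{c ∈ G} V_c` over `ℂ`,
`ψ : G → ℂˣ` is a character, `T` has class `c₀` (i.e. `T(V_c) ⊆ V_{c₀ c}`), and `T v = μ v`,
then `v ⊗ ψ := Σ_c ψ(c)⁻¹ • v_c` satisfies `T (v ⊗ ψ) = ψ(c₀) μ (v ⊗ ψ)`. -/
theorem twist_of_eigenvector
    {G : Type*} [Group G] [DecidableEq G] {V : Type*}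
    [AddCommGroup V] [Module ℂ V] (Vc : G → Submodule ℂ V)
    [DirectSum.Decomposition Vc]
    (ψ : G →* ℂˣ) (c₀ : G) (T : V →ₗ[ℂ] V)
    (hT : ∀ c : G, ∀ x ∈ Vc c, T x ∈ Vc (c₀ * c))
    (v : V) (μ : ℂ) (hv : T v = μ • v) :
    T (∑ᶠ c : G, ((ψ c)⁻¹ : ℂˣ) • (DirectSum.decompose Vc v c : V))
      = (ψ c₀ : ℂ) • μ • ∑ᶠ c : G, ((ψ c)⁻¹ : ℂˣ) • (DirectSum.decompose Vc v c : V) := by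
  have hcomp (c : G) : T (DirectSum.decompose Vc v c : V)
      = μ • (DirectSum.decompose Vc v (c₀ * c) : V) := by
    rw [← decompose_apply_of_class Vc c₀ T hT, hv, DirectSum.decompose_smul]
    rfl
  have hfin : (Function.support fun c : G =>
      ((ψ c)⁻¹ : ℂˣ) • (DirectSum.decompose Vc v c : V)).Finite := by
    refine (DFinsupp.finite_support (DirectSum.decompose Vc v)).subset fun c hc h0 => hc ?_
    simp [h0]
  -- Reindex the right-hand sum along `c ↦ c₀ * c`, so that both sides agree term by term.
  rw [map_finsum T hfin, ← finsum_comp_equiv (Equiv.mulLeft c₀)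
    (f := fun c : G => ((ψ c)⁻¹ : ℂˣ) • (DirectSum.decompose Vc v c : V)),
    smul_finsum, smul_finsum]
  refine finsum_congr fun c => ?_
  simp only [Units.smul_def, map_smul, hcomp, Equiv.coe_mulLeft, smul_smul, map_mul, mul_inv,
    Units.val_mul]
  congr 1
  rw [Units.val_inv_eq_inv_val (ψ c₀)]
  field_simp [(ψ c₀).ne_zero]
end

section
/- Let K be a number field with ring of integers 𝓞_K, let 𝔫 be a nonzero ideal, and let 𝔮 be a principal exact divisor of 𝔫, so that 𝔫 = 𝔮𝔮' with 𝔮 and 𝔮' coprime and 𝔮 principal. Then there exists a W_𝔮-matrix of level 𝔫: elements x, y, z, w of 𝓞_K with x ∈ 𝔮, y ∈ 𝓞_K, z ∈ 𝔫, w ∈ 𝔮, such that the ideal generated by xw − yz equals 𝔮. -/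
open NumberField

/-- Existence of `W_𝔮`-matrices: if `𝔮` is a principal exact divisor of the level `𝔫`
(i.e. `𝔫 = 𝔮𝔮'` with `𝔮, 𝔮'` coprime and `𝔮` principal), then there exist
`x, y, z, w ∈ 𝓞_K` with `x, w ∈ 𝔮`, `z ∈ 𝔫`, and `⟨xw - yz⟩ = 𝔮`. -/
theorem exists_Wq_matrix
    {K : Type*} [Field K] [NumberField K] (n q q' : Ideal (𝓞 K))
    (hn : n ≠ 0) (hqq' : n = q * q') (hcop : IsCoprime q q')
    (hprin : Submodule.IsPrincipal q) :
    ∃ x y z w : 𝓞 K, x ∈ q ∧ z ∈ n ∧ w ∈ q ∧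
      Ideal.span {x * w - y * z} = q := by
  obtain ⟨g, hg⟩ := hprin
  obtain ⟨a, ha, b, hb, hab⟩ := Ideal.isCoprime_iff_exists.mp hcop
  have hgq : g ∈ q := hg ▸ Submodule.mem_span_singleton_self g
  -- With `q = (g)` and `a + b = 1`, `[[g, -1], [g * b, a]]` has determinant `g * (a + b) = g`.
  refine ⟨g, -1, g * b, a, hgq, hqq' ▸ Ideal.mul_mem_mul hgq hb, ha, ?_⟩
  rw [show g * a - -1 * (g * b) = g by linear_combination g * hab]
  exact hg.symm
end

section
/- Let K be a number field with ring of integers 𝓞_K, let 𝔫 be a nonzero ideal, let 𝔮 be an exact divisor of 𝔫 (𝔫 = 𝔮𝔮' with 𝔮, 𝔮' coprime), and let 𝔪 be a nonzero ideal such that 𝔮𝔪² is a principal ideal. Then there exists a W_𝔮^𝔪-matrix of level 𝔫: elements x, y, z, w of 𝓞_K with x ∈ 𝔪𝔮, y ∈ 𝔪, z ∈ 𝔪𝔫, w ∈ 𝔪𝔮, such that the ideal generated by xw − yz equals 𝔮𝔪². -/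
/-!
It suffices to find `x ∈ 𝔪𝔮` and `y ∈ 𝔪` with `(x) + (y)𝔮' = 𝔪`: multiplying by `𝔪𝔮` gives
`𝔮𝔪² = x·𝔪𝔮 + y·𝔪𝔫`, so that a generator of `𝔮𝔪²` has the form `xw - yz` with `w ∈ 𝔪𝔮`, `z ∈ 𝔪𝔫`.

In a Dedekind domain any inclusion `0 ≠ I ≤ J` admits an element `a` with `J = I + (a)`. Applied to
`𝔪𝔫 ≤ 𝔪𝔮` this gives `x` with `𝔪𝔫 + (x) = 𝔪𝔮`, which may be taken nonzero; applied to
`(x) ≤ 𝔪` it gives `y` with `(x) + (y) = 𝔪`. Then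
`(x) + (y)𝔮' = (x) + 𝔪𝔮' = (x) + 𝔪𝔫 + 𝔪𝔮' = 𝔪𝔮 + 𝔪𝔮' = 𝔪`,
where the last equality is the coprimality hypothesis.
-/

/-- The generator of `J` modulo `I` can be chosen nonzero: if `0` works then `I = J`, and any
nonzero element of `I` works as well. -/
lemma exists_ne_zero_sup_span_eq {R : Type*} [CommRing R] [IsDedekindDomain R] {I J : Ideal R}
    (hIJ : I ≤ J) (hI : I ≠ 0) : ∃ a, a ≠ 0 ∧ I ⊔ Ideal.span {a} = J := by
  obtain ⟨a, ha⟩ := IsDedekindDomain.exists_sup_span_eq hIJ hI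
  by_cases h0 : a = 0
  · obtain ⟨b, hb, hb0⟩ := Submodule.exists_mem_ne_zero_of_ne_bot hI
    refine ⟨b, hb0, ?_⟩
    have hIJ' : I = J := by simpa [h0] using ha
    rw [← hIJ', sup_eq_left]
    exact (Ideal.span_singleton_le_iff_mem I).2 hb
  · exact ⟨a, h0, ha⟩

/-- The theorem over an arbitrary Dedekind domain. -/
lemma exists_Wqm_matrix_dedekind
    {R : Type*} [CommRing R] [IsDedekindDomain R] (n q q' m : Ideal R)
    (hn : n ≠ 0) (hqq' : n = q * q') (hcop : IsCoprime q q')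
    (hm : m ≠ 0) (hprin : Submodule.IsPrincipal (q * m ^ 2)) :
    ∃ x y z w : R, x ∈ m * q ∧ y ∈ m ∧ z ∈ m * n ∧ w ∈ m * q ∧
      Ideal.span {x * w - y * z} = q * m ^ 2 := by
  have hle : m * n ≤ m * q := by
    rw [hqq']
    exact Ideal.mul_mono_right Ideal.mul_le_left
  obtain ⟨x, hx0, hx⟩ := exists_ne_zero_sup_span_eq hle (mul_ne_zero hm hn)
  have hxmq : x ∈ m * q := by
    rw [← hx]
    exact Ideal.mem_sup_right (Ideal.mem_span_singleton_self x)
  have hxm : Ideal.span {x} ≤ m :=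
    (Ideal.span_singleton_le_iff_mem m).2 (Ideal.mul_le_left hxmq)
  obtain ⟨y, hy⟩ := IsDedekindDomain.exists_sup_span_eq hxm (by simpa using hx0)
  have hym : y ∈ m := by
    rw [← hy]
    exact Ideal.mem_sup_right (Ideal.mem_span_singleton_self y)
  have hkey : Ideal.span {x} ⊔ Ideal.span {y} * q' = m := by
    have hx' : m * n + Ideal.span {x} = m * q := hx
    have hy' : Ideal.span {x} + Ideal.span {y} = m := hy
    have hc : q + q' = 1 := Ideal.isCoprime_iff_add.1 hcop
    have h1 : Ideal.span {x} + Ideal.span {x} * q' = Ideal.span {x} :=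
      sup_eq_left.2 Ideal.mul_le_left
    have h2 : m * q' + m * n = m * q' := by
      refine sup_eq_left.2 ?_
      rw [hqq']
      exact Ideal.mul_mono_right Ideal.mul_le_right
    change Ideal.span {x} + Ideal.span {y} * q' = m
    calc Ideal.span {x} + Ideal.span {y} * q'
        = Ideal.span {x} + (Ideal.span {x} + Ideal.span {y}) * q' := by
          rw [add_mul, ← add_assoc, h1]
      _ = m * q' + (m * n + Ideal.span {x}) := by
          rw [hy', ← add_assoc, h2, add_comm]
      _ = m * (q + q') := by rw [hx', mul_add, add_comm]
      _ = m := by rw [hc, mul_one]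
  obtain ⟨g, hg⟩ := hprin.principal
  have hg' : q * m ^ 2 = Ideal.span {g} := hg
  have hdecomp : q * m ^ 2 = Ideal.span {x} * (m * q) ⊔ Ideal.span {y} * (m * n) := by
    calc q * m ^ 2 = m * (m * q) := by ring
      _ = (Ideal.span {x} ⊔ Ideal.span {y} * q') * (m * q) := by rw [hkey]
      _ = Ideal.span {x} * (m * q) ⊔ Ideal.span {y} * (m * n) := by
          rw [Ideal.sup_mul, hqq', mul_assoc, mul_left_comm q', mul_comm q' q]
  have hmem : g ∈ Ideal.span {x} * (m * q) ⊔ Ideal.span {y} * (m * n) := by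
    rw [← hdecomp, hg']
    exact Ideal.mem_span_singleton_self g
  obtain ⟨a, ha, b, hb, hab⟩ := Submodule.mem_sup.1 hmem
  obtain ⟨w, hw, rfl⟩ := Ideal.mem_span_singleton_mul.1 ha
  obtain ⟨z, hz, rfl⟩ := Ideal.mem_span_singleton_mul.1 hb
  refine ⟨x, y, -z, w, hxmq, hym, neg_mem hz, hw, ?_⟩
  rw [hg', ← hab]
  congr 2
  ring

open NumberField

/-- Existence of `W_𝔮^𝔪`-matrices: if `𝔮` is an exact divisor of the level `𝔫`
(i.e. `𝔫 = 𝔮𝔮'` with `𝔮, 𝔮'` coprime) and `𝔪` is a nonzero ideal with `𝔮𝔪²` principal,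
then there exist `x, y, z, w ∈ 𝓞_K` with `x, w ∈ 𝔪𝔮`, `y ∈ 𝔪`, `z ∈ 𝔪𝔫`, and
`⟨xw - yz⟩ = 𝔮𝔪²`. -/
theorem exists_Wqm_matrix
    {K : Type*} [Field K] [NumberField K] (n q q' m : Ideal (𝓞 K))
    (hn : n ≠ 0) (hqq' : n = q * q') (hcop : IsCoprime q q')
    (hm : m ≠ 0) (hprin : Submodule.IsPrincipal (q * m ^ 2)) :
    ∃ x y z w : 𝓞 K, x ∈ m * q ∧ y ∈ m ∧ z ∈ m * n ∧ w ∈ m * q ∧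
      Ideal.span {x * w - y * z} = q * m ^ 2 := by
  exact exists_Wqm_matrix_dedekind n q q' m hn hqq' hcop hm hprin
end

section
/- Let K be a number field with ring of integers 𝓞_K and 𝔫 a nonzero ideal. For i = 1, 2 let 𝔮_i be an exact divisor of 𝔫, let 𝔪_i be a nonzero ideal with 𝔮_i𝔪_i² principal, and let M_i be a W_{𝔮_i}^{𝔪_i}-matrix of level 𝔫. Set 𝔞 = 𝔮₁ + 𝔮₂ (the greatest common divisor), 𝔮₃ = 𝔮₁𝔮₂𝔞⁻² (so 𝔮₁𝔮₂ = 𝔮₃𝔞²) and 𝔪₃ = 𝔞𝔪₁𝔪₂. Then 𝔮₃ is an exact divisor of 𝔫, the ideal 𝔮₃𝔪₃² is principal, and the matrix product M₁M₂ is a W_{𝔮₃}^{𝔪₃}-matrix of level 𝔫: its diagonal entries lie in 𝔪₃𝔮₃, its upper-right entry lies in 𝔪₃, its lower-left entry lies in 𝔪₃𝔫, and its determinant generates 𝔮₃𝔪₃². -/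
/-!
Write `𝔞 = 𝔮₁ + 𝔮₂`, `𝔮₁ = 𝔞𝔟₁`, `𝔮₂ = 𝔞𝔟₂` with `𝔟₁`, `𝔟₂` coprime. Comparing the two factorizations of
`𝔫` gives `𝔫 = 𝔞𝔟₁𝔟₂𝔠` with `𝔮₁' = 𝔟₂𝔠` and `𝔮₂' = 𝔟₁𝔠`, while `𝔮₃ = 𝔟₁𝔟₂`. Exactness of `𝔮₁` and `𝔮₂`
then makes `𝔟₁𝔟₂` coprime to `𝔞𝔠`, so `𝔮₃` is an exact divisor. Multiplicativity of the determinant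
identifies `𝔮₃𝔪₃²` with the ideal generated by `det (M₁M₂)`, and every product of entries occurring in
`M₁M₂` lies in an ideal that is visibly a multiple of the required one.
-/

open NumberField

/-- A `W_𝔮^𝔪`-matrix of level `𝔫`: a 2×2 matrix over `𝓞_K` with diagonal entries in `𝔪𝔮`,
upper-right entry in `𝔪`, lower-left entry in `𝔪𝔫`, whose determinant generates `𝔮𝔪²`. -/
def IsWMatrix {K : Type*} [Field K] [NumberField K] (n q m : Ideal (𝓞 K))
    (M : Matrix (Fin 2) (Fin 2) (𝓞 K)) : Prop :=
  M 0 0 ∈ m * q ∧ M 1 1 ∈ m * q ∧ M 0 1 ∈ m ∧ M 1 0 ∈ m * n ∧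
    Ideal.span {M.det} = q * m ^ 2

lemma mul_mem_of_mul_eq {R : Type*} [CommRing R] {I J L C : Ideal R} {x y : R}
    (hx : x ∈ I) (hy : y ∈ J) (h : I * J = L * C) : x * y ∈ L := by
  have hxy : x * y ∈ L * C := by
    rw [← h]
    exact Ideal.mul_mem_mul hx hy
  exact (Ideal.mul_le_left : L * C ≤ L) hxy

/-- Common refinement `n = a * b₁ * b₂ * c` of two factorizations of a nonzero ideal `n`, where `a` is
the greatest common divisor of `q₁` and `q₂`. -/
lemma exists_refinement {R : Type*} [CommRing R] [IsDedekindDomain R]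
    {n q₁ q₂ q₁' q₂' : Ideal R} (hn : n ≠ 0) (h₁ : n = q₁ * q₁') (h₂ : n = q₂ * q₂') :
    ∃ a b₁ b₂ c : Ideal R, a ≠ 0 ∧ q₁ + q₂ = a ∧ q₁ = a * b₁ ∧ q₂ = a * b₂ ∧
      q₁' = b₂ * c ∧ q₂' = b₁ * c ∧ IsCoprime b₁ b₂ := by
  have hq₁ : q₁ ≠ 0 := by rintro rfl; simp [h₁] at hn
  have ha : q₁ + q₂ ≠ 0 := fun h => hq₁ (le_bot_iff.mp (h ▸ le_sup_left : q₁ ≤ (0 : Ideal R)))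
  obtain ⟨b₁, hb₁⟩ : q₁ + q₂ ∣ q₁ := Ideal.dvd_iff_le.mpr le_sup_left
  obtain ⟨b₂, hb₂⟩ : q₁ + q₂ ∣ q₂ := Ideal.dvd_iff_le.mpr le_sup_right
  generalize hq : q₁ + q₂ = a at *
  have hb : IsCoprime b₁ b₂ := by
    rw [Ideal.isCoprime_iff_add]
    apply mul_left_cancel₀ ha
    rw [mul_add, ← hb₁, ← hb₂, hq, mul_one]
  have e : b₁ * q₁' = b₂ * q₂' := by
    apply mul_left_cancel₀ ha
    rw [← mul_assoc, ← mul_assoc, ← hb₁, ← hb₂, ← h₁, h₂]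
  obtain ⟨c, rfl⟩ : b₂ ∣ q₁' := hb.symm.dvd_of_dvd_mul_left ⟨q₂', e⟩
  have hb₂ne : b₂ ≠ 0 := by rintro rfl; simp [h₁] at hn
  refine ⟨a, b₁, b₂, c, ha, rfl, hb₁, hb₂, rfl, ?_, hb⟩
  apply mul_left_cancel₀ hb₂ne
  rw [← e]; ring

/-- Products of `W_𝔮^𝔪`-matrices: if `M i` is a `W_{𝔮ᵢ}^{𝔪ᵢ}`-matrix of level `𝔫` for
`i = 1, 2`, then, with `𝔞 = 𝔮₁ + 𝔮₂`, `𝔮₃ = 𝔮₁𝔮₂𝔞⁻²` and `𝔪₃ = 𝔞𝔪₁𝔪₂`, the ideal `𝔮₃` is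
an exact divisor of `𝔫`, the ideal `𝔮₃𝔪₃²` is principal, and `M₁M₂` is a
`W_{𝔮₃}^{𝔪₃}`-matrix of level `𝔫`. -/
theorem mul_WMatrix
    {K : Type*} [Field K] [NumberField K] (n : Ideal (𝓞 K)) (hn : n ≠ 0)
    (q₁ q₂ q₁' q₂' m₁ m₂ : Ideal (𝓞 K))
    (h₁ : n = q₁ * q₁') (h₁c : IsCoprime q₁ q₁')
    (h₂ : n = q₂ * q₂') (h₂c : IsCoprime q₂ q₂')
    (hm₁ : m₁ ≠ 0) (hm₂ : m₂ ≠ 0)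
    (hp₁ : Submodule.IsPrincipal (q₁ * m₁ ^ 2)) (hp₂ : Submodule.IsPrincipal (q₂ * m₂ ^ 2))
    (M₁ M₂ : Matrix (Fin 2) (Fin 2) (𝓞 K))
    (hM₁ : IsWMatrix n q₁ m₁ M₁) (hM₂ : IsWMatrix n q₂ m₂ M₂)
    (q₃ : Ideal (𝓞 K)) (hq₃ : q₁ * q₂ = q₃ * (q₁ + q₂) ^ 2) :
    (∃ q₃' : Ideal (𝓞 K), n = q₃ * q₃' ∧ IsCoprime q₃ q₃') ∧
    Submodule.IsPrincipal (q₃ * ((q₁ + q₂) * m₁ * m₂) ^ 2) ∧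
    IsWMatrix n q₃ ((q₁ + q₂) * m₁ * m₂) (M₁ * M₂) := by
  obtain ⟨a, b₁, b₂, c, ha, hsum, rfl, rfl, rfl, rfl, hb⟩ := exists_refinement hn h₁ h₂
  rw [hsum] at hq₃ ⊢
  obtain rfl : q₃ = b₁ * b₂ := by
    apply mul_right_cancel₀ (pow_ne_zero 2 ha)
    rw [← hq₃]; ring
  obtain ⟨hx₁, hw₁, hy₁, hz₁, hd₁⟩ := hM₁
  obtain ⟨hx₂, hw₂, hy₂, hz₂, hd₂⟩ := hM₂
  have hdet : Ideal.span {(M₁ * M₂).det} = b₁ * b₂ * (a * m₁ * m₂) ^ 2 := by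
    rw [Matrix.det_mul, ← Ideal.span_singleton_mul_span_singleton, hd₁, hd₂]; ring
  subst h₁
  refine ⟨⟨a * c, by ring, ?_⟩, ⟨⟨_, hdet.symm⟩⟩, ?_, ?_, ?_, ?_, hdet⟩
  · exact .mul_left
      (.mul_right h₂c.of_mul_left_left.of_mul_right_left.symm h₁c.of_mul_left_right.of_mul_right_right)
      (.mul_right h₁c.of_mul_left_left.of_mul_right_left.symm h₂c.of_mul_left_right.of_mul_right_right)
  · rw [Matrix.mul_apply, Fin.sum_univ_two]
    exact add_mem (mul_mem_of_mul_eq (C := a) hx₁ hx₂ (by ring))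
      (mul_mem_of_mul_eq (C := c) hy₁ hz₂ (by ring))
  · rw [Matrix.mul_apply, Fin.sum_univ_two]
    exact add_mem (mul_mem_of_mul_eq (C := c) hz₁ hy₂ (by ring))
      (mul_mem_of_mul_eq (C := a) hw₁ hw₂ (by ring))
  · rw [Matrix.mul_apply, Fin.sum_univ_two]
    exact add_mem (mul_mem_of_mul_eq (C := b₁) hx₁ hy₂ (by ring))
      (mul_mem_of_mul_eq (C := b₂) hy₁ hw₂ (by ring))
  · rw [Matrix.mul_apply, Fin.sum_univ_two]
    exact add_mem (mul_mem_of_mul_eq (C := b₂) hz₁ hx₂ (by ring))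
      (mul_mem_of_mul_eq (C := b₁) hw₁ hz₂ (by ring))
end

section
/- Let K be a number field with ring of integers 𝓞_K, let 𝔫 be a nonzero ideal, let 𝔮 be an exact divisor of 𝔫 and 𝔪 a nonzero ideal with 𝔮𝔪² principal. Let M₁ and M₂ be two W_𝔮^𝔪-matrices of level 𝔫 (for the same 𝔫, 𝔮, 𝔪). Then M₂ is invertible as a matrix over K, and the matrix M₁M₂⁻¹ (computed over K) belongs to Γ₀(𝔫): all its entries lie in 𝓞_K, its determinant is a unit of 𝓞_K, and its lower-left entry lies in 𝔫. Similarly M₁⁻¹M₂ ∈ Γ₀(𝔫). -/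
/-!
Let `D` generate `𝔮𝔪²`. The adjugate of a `W`-matrix is again a `W`-matrix, and the inverse over
`K` is the adjugate divided by the determinant, so both quotients have the form `D⁻¹ • (A * B)`
with `A`, `B` two `W`-matrices and `D` the determinant of one of the given matrices. Since
`𝔫 ⊆ 𝔮`, every entry of `A * B` lies in `𝔮𝔪² = (D)`, and the lower-left one lies in
`𝔮𝔪²𝔫 = D𝔫`; hence `A * B = D • γ` with `γ` integral and lower-left entry in `𝔫`. Comparing
determinants, `(D)² = (det A)(det B) = (D)² (det γ)`, so `det γ` is a unit. This is
`IsWMatrix.exists_mul_eq_smul`.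
-/

open NumberField

section

variable {K : Type*} [Field K] [NumberField K] {n q m : Ideal (𝓞 K)}

theorem IsWMatrix.adjugate {M : Matrix (Fin 2) (Fin 2) (𝓞 K)} (h : IsWMatrix n q m M) :
    IsWMatrix n q m M.adjugate := by
  obtain ⟨h00, h11, h01, h10, hdet⟩ := h
  have hd : M.adjugate.det = M.det := by
    simp [Matrix.det_adjugate]
  refine ⟨?_, ?_, ?_, ?_, by rw [hd, hdet]⟩ <;> simpa [Matrix.adjugate_fin_two]

/-- The product of two `W`-matrices is a generator of `𝔮𝔪²` times an element of `Γ₀(𝔫)`. -/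
theorem IsWMatrix.exists_mul_eq_smul (hnq : n ≤ q) {A B : Matrix (Fin 2) (Fin 2) (𝓞 K)}
    (hA : IsWMatrix n q m A) (hB : IsWMatrix n q m B) {D : 𝓞 K} (hD0 : D ≠ 0)
    (hD : Ideal.span {D} = q * m ^ 2) :
    ∃ γ : Matrix (Fin 2) (Fin 2) (𝓞 K), IsUnit γ.det ∧ γ 1 0 ∈ n ∧ A * B = D • γ := by
  obtain ⟨a00, a11, a01, a10, adet⟩ := hA
  obtain ⟨b00, b11, b01, b10, bdet⟩ := hB
  have hmn : m * n ≤ m * q := Ideal.mul_mono_right hnq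
  -- Each product of entries lies in the left-hand side of one of these three relations.
  have e1 : (m * q) * (m * q) ≤ q * m ^ 2 := by
    calc (m * q) * (m * q) = (q * m ^ 2) * q := by ring
      _ ≤ q * m ^ 2 := Ideal.mul_le_left
  have e2 : m * (m * q) = q * m ^ 2 := by ring
  have e3 : (m * n) * (m * q) = Ideal.span {D} * n := by rw [hD]; ring
  have hent : ∀ i j, ∃ g, (A * B) i j = D * g := by
    intro i j
    suffices h : (A * B) i j ∈ Ideal.span {D} from Ideal.mem_span_singleton.1 h
    rw [hD, Matrix.mul_apply, Fin.sum_univ_two]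
    fin_cases i <;> fin_cases j
    · exact add_mem (e1 (Ideal.mul_mem_mul a00 b00))
        (e2 ▸ Ideal.mul_mem_mul a01 (hmn b10))
    · refine add_mem ?_ (e2 ▸ Ideal.mul_mem_mul a01 b11)
      exact e2 ▸ Ideal.mul_mem_mul_rev b01 a00
    · exact add_mem (e1 (Ideal.mul_mem_mul (hmn a10) b00))
        (e1 (Ideal.mul_mem_mul a11 (hmn b10)))
    · refine add_mem ?_ (e1 (Ideal.mul_mem_mul a11 b11))
      exact e2 ▸ Ideal.mul_mem_mul_rev b01 (hmn a10)
  choose g hg using hent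
  have hAB : A * B = D • Matrix.of g := by
    ext i j
    simp [hg]
  refine ⟨Matrix.of g, ?_, ?_, hAB⟩
  · have h := congrArg Matrix.det hAB
    rw [Matrix.det_mul, Matrix.det_smul, Fintype.card_fin] at h
    have h2 : Ideal.span {D ^ 2 * (Matrix.of g).det} = Ideal.span {D ^ 2} := by
      rw [← h, ← Ideal.span_singleton_mul_span_singleton, adet, bdet, ← hD,
        Ideal.span_singleton_mul_span_singleton, sq]
    rw [Ideal.span_singleton_eq_span_singleton] at h2
    have h3 : D ^ 2 * (Matrix.of g).det ∣ D ^ 2 * 1 := by simpa using h2.dvd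
    exact isUnit_of_dvd_one ((mul_dvd_mul_iff_left (pow_ne_zero 2 hD0)).1 h3)
  · have h : (A * B) 1 0 ∈ Ideal.span {D} * n := by
      rw [Matrix.mul_apply, Fin.sum_univ_two, ← e3]
      exact add_mem (Ideal.mul_mem_mul a10 b00) (Ideal.mul_mem_mul_rev b10 a11)
    obtain ⟨z, hz, hz'⟩ := Ideal.mem_span_singleton_mul.1 h
    rw [hg] at hz'
    have hzg : z = g 1 0 := mul_left_cancel₀ hD0 hz'
    rwa [hzg] at hz

end

theorem map_inv_eq_smul {K : Type*} [Field K] (M : Matrix (Fin 2) (Fin 2) (𝓞 K)) :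
    (M.map (algebraMap (𝓞 K) K))⁻¹ =
      (algebraMap (𝓞 K) K M.det)⁻¹ • M.adjugate.map (algebraMap (𝓞 K) K) := by
  have hdet : (M.map (algebraMap (𝓞 K) K)).det = algebraMap (𝓞 K) K M.det :=
    (RingHom.map_det _ _).symm
  have hadj : (M.map (algebraMap (𝓞 K) K)).adjugate =
      M.adjugate.map (algebraMap (𝓞 K) K) :=
    (RingHom.map_adjugate _ _).symm
  rw [Matrix.inv_def, hdet, hadj, Ring.inverse_eq_inv']

theorem map_eq_inv_smul_map {K : Type*} [Field K] {D : 𝓞 K} (hD : D ≠ 0) {P γ : Matrix (Fin 2) (Fin 2) (𝓞 K)}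
    (h : P = D • γ) :
    γ.map (algebraMap (𝓞 K) K) =
      (algebraMap (𝓞 K) K D)⁻¹ • P.map (algebraMap (𝓞 K) K) := by
  have hD' : algebraMap (𝓞 K) K D ≠ 0 := by simpa using hD
  ext i j
  simp [h, hD]

/-- If `M₁, M₂` are `W_𝔮^𝔪`-matrices of the same level `𝔫` (and same `𝔮`, `𝔪`), then `M₂` is
invertible over `K` and both `M₁M₂⁻¹` and `M₁⁻¹M₂`, computed over `K`, lie in `Γ₀(𝔫)`:
they are integral matrices with unit determinant and lower-left entry in `𝔫`. -/
theorem WMatrix_quotients_mem_Gamma0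
    {K : Type*} [Field K] [NumberField K] (n : Ideal (𝓞 K)) (hn : n ≠ 0)
    (q q' m : Ideal (𝓞 K))
    (hqq' : n = q * q') (hcop : IsCoprime q q')
    (hm : m ≠ 0) (hprin : Submodule.IsPrincipal (q * m ^ 2))
    (M₁ M₂ : Matrix (Fin 2) (Fin 2) (𝓞 K))
    (hM₁ : IsWMatrix n q m M₁) (hM₂ : IsWMatrix n q m M₂) :
    IsUnit (M₂.map (algebraMap (𝓞 K) K)).det ∧
    (∃ γ : Matrix (Fin 2) (Fin 2) (𝓞 K), IsUnit γ.det ∧ γ 1 0 ∈ n ∧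
      γ.map (algebraMap (𝓞 K) K) =
        M₁.map (algebraMap (𝓞 K) K) * (M₂.map (algebraMap (𝓞 K) K))⁻¹) ∧
    (∃ γ : Matrix (Fin 2) (Fin 2) (𝓞 K), IsUnit γ.det ∧ γ 1 0 ∈ n ∧
      γ.map (algebraMap (𝓞 K) K) =
        (M₁.map (algebraMap (𝓞 K) K))⁻¹ * M₂.map (algebraMap (𝓞 K) K)) := by
  have hnq : n ≤ q := hqq' ▸ Ideal.mul_le_left
  have hq : q ≠ 0 := by
    rintro rfl
    exact hn (by rw [hqq', zero_mul])
  have hne : q * m ^ 2 ≠ 0 := mul_ne_zero hq (pow_ne_zero 2 hm)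
  have hdet : ∀ M, IsWMatrix n q m M → M.det ≠ 0 := by
    intro M hM h0
    apply hne
    rw [← hM.2.2.2.2, h0]
    simp
  refine ⟨?_, ?_, ?_⟩
  · have h : (M₂.map (algebraMap (𝓞 K) K)).det = algebraMap (𝓞 K) K M₂.det :=
      (RingHom.map_det _ _).symm
    rw [h, isUnit_iff_ne_zero]
    simpa using hdet M₂ hM₂
  · obtain ⟨γ, hu, hl, h⟩ :=
      hM₁.exists_mul_eq_smul hnq hM₂.adjugate (hdet M₂ hM₂) hM₂.2.2.2.2
    refine ⟨γ, hu, hl, ?_⟩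
    rw [map_eq_inv_smul_map (hdet M₂ hM₂) h, map_inv_eq_smul, Matrix.map_mul, Matrix.mul_smul]
  · obtain ⟨γ, hu, hl, h⟩ :=
      hM₁.adjugate.exists_mul_eq_smul hnq hM₂ (hdet M₁ hM₁) hM₁.2.2.2.2
    refine ⟨γ, hu, hl, ?_⟩
    rw [map_eq_inv_smul_map (hdet M₁ hM₁) h, map_inv_eq_smul, Matrix.map_mul, Matrix.smul_mul]
end

section
/- Let K be a number field with ring of integers 𝓞_K, let 𝔫 be a nonzero ideal, let 𝔮 be an exact divisor of 𝔫 and 𝔪 a nonzero ideal with 𝔮𝔪² principal, and let M be a W_𝔮^𝔪-matrix of level 𝔫. Then the set of all W_𝔮^𝔪-matrices of level 𝔫 equals the left coset M·Γ₀(𝔫) = {M·γ : γ ∈ Γ₀(𝔫)} and also equals the right coset Γ₀(𝔫)·M = {γ·M : γ ∈ Γ₀(𝔫)}. -/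
/-!
Each coset consists of `W`-matrices by an entrywise ideal computation based on `𝔫 ⊆ 𝔮`.

Conversely, if `M` and `M'` are `W`-matrices and `δ = det M`, then the entries of `adj(M) M'` and
of `M' adj(M)` lie in `𝔮𝔪² = (δ)`, and the lower-left one lies even in `𝔮𝔪²𝔫 = δ𝔫`. Dividing by
`δ` therefore gives an integral matrix `γ` with lower-left entry in `𝔫`, and `M' = Mγ`
(resp. `M' = γM`) because `M adj(M) = adj(M) M = δ`. Its determinant is a unit since `det M` and
`det M'` generate the same ideal.
-/

open NumberField

section Helpers

variable {K : Type*} [Field K] [NumberField K] {n q m : Ideal (𝓞 K)}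
  {M M' γ : Matrix (Fin 2) (Fin 2) (𝓞 K)}

theorem mul_mem_of_mul_le {R : Type*} [CommRing R] {I J L : Ideal R} {a b : R} (ha : a ∈ I) (hb : b ∈ J)
    (h : I * J ≤ L) : a * b ∈ L :=
  h (Ideal.mul_mem_mul ha hb)

theorem IsWMatrix.mul_right (hnq : n ≤ q) (hM : IsWMatrix n q m M) (hγ : IsUnit γ.det)
    (hc : γ 1 0 ∈ n) : IsWMatrix n q m (M * γ) := by
  obtain ⟨hx, hw, hy, hz, hd⟩ := hM
  have hmn : m * n ≤ m * q := Ideal.mul_mono_right hnq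
  refine ⟨?_, ?_, ?_, ?_, ?_⟩
  · rw [Matrix.mul_apply, Fin.sum_univ_two]
    exact add_mem (Ideal.mul_mem_right _ _ hx) (mul_mem_of_mul_le hy hc hmn)
  · rw [Matrix.mul_apply, Fin.sum_univ_two]
    exact add_mem (Ideal.mul_mem_right _ _ (hmn hz)) (Ideal.mul_mem_right _ _ hw)
  · rw [Matrix.mul_apply, Fin.sum_univ_two]
    exact add_mem (Ideal.mul_mem_right _ _ (Ideal.mul_le_left hx)) (Ideal.mul_mem_right _ _ hy)
  · rw [Matrix.mul_apply, Fin.sum_univ_two]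
    exact add_mem (Ideal.mul_mem_right _ _ hz)
      (mul_mem_of_mul_le (Ideal.mul_le_left hw) hc le_rfl)
  · rw [Matrix.det_mul, Ideal.span_singleton_mul_right_unit hγ, hd]

theorem IsWMatrix.mul_left (hnq : n ≤ q) (hM : IsWMatrix n q m M) (hγ : IsUnit γ.det)
    (hc : γ 1 0 ∈ n) : IsWMatrix n q m (γ * M) := by
  obtain ⟨hx, hw, hy, hz, hd⟩ := hM
  have hmn : m * n ≤ m * q := Ideal.mul_mono_right hnq
  refine ⟨?_, ?_, ?_, ?_, ?_⟩
  · rw [Matrix.mul_apply, Fin.sum_univ_two]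
    exact add_mem (Ideal.mul_mem_left _ _ hx) (Ideal.mul_mem_left _ _ (hmn hz))
  · rw [Matrix.mul_apply, Fin.sum_univ_two]
    exact add_mem (mul_mem_of_mul_le hc hy ((mul_comm n m).le.trans hmn))
      (Ideal.mul_mem_left _ _ hw)
  · rw [Matrix.mul_apply, Fin.sum_univ_two]
    exact add_mem (Ideal.mul_mem_left _ _ hy) (Ideal.mul_mem_left _ _ (Ideal.mul_le_left hw))
  · rw [Matrix.mul_apply, Fin.sum_univ_two]
    exact add_mem (mul_mem_of_mul_le hc (Ideal.mul_le_left hx) (mul_comm n m).le)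
      (Ideal.mul_mem_left _ _ hz)
  · rw [Matrix.det_mul, Ideal.span_singleton_mul_left_unit hγ, hd]

/-- A matrix with entries in `(δ)` and lower-left entry in `δ𝔫` is `δ` times an integral matrix
with lower-left entry in `𝔫`. -/
theorem exists_eq_smul {R : Type*} [CommRing R] {n : Ideal R}
    {P : Matrix (Fin 2) (Fin 2) R} {δ : R}
    (h00 : P 0 0 ∈ Ideal.span {δ}) (h01 : P 0 1 ∈ Ideal.span {δ})
    (h11 : P 1 1 ∈ Ideal.span {δ}) (h10 : P 1 0 ∈ Ideal.span {δ} * n) :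
    ∃ γ : Matrix (Fin 2) (Fin 2) R, γ 1 0 ∈ n ∧ P = δ • γ := by
  obtain ⟨a, ha⟩ := Ideal.mem_span_singleton.1 h00
  obtain ⟨b, hb⟩ := Ideal.mem_span_singleton.1 h01
  obtain ⟨d, hd⟩ := Ideal.mem_span_singleton.1 h11
  obtain ⟨c, hc, hc'⟩ := Ideal.mem_span_singleton_mul.1 h10
  refine ⟨!![a, b; c, d], by simpa using hc, ?_⟩
  ext i j
  fin_cases i <;> fin_cases j <;> simp [ha, hb, hd, hc']

/-- The ideal memberships of the products of entries of two `W`-matrices that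
occur in `adj(M) M'` and `M' adj(M)`. -/
theorem IsWMatrix.products (hnq : n ≤ q) (hM : IsWMatrix n q m M) (hM' : IsWMatrix n q m M') :
    (∀ i j, M i i * M' j j ∈ q * m ^ 2) ∧ (∀ i, M i i * M' 0 1 ∈ q * m ^ 2) ∧
    M 0 1 * M' 1 0 ∈ q * m ^ 2 ∧ (∀ i, M i i * M' 1 0 ∈ q * m ^ 2 * n) := by
  obtain ⟨hx, hw, hy, hz, -⟩ := hM
  obtain ⟨hx', hw', hy', hz', -⟩ := hM'
  have hD : ∀ i, M i i ∈ m * q := Fin.forall_fin_two.2 ⟨hx, hw⟩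
  have hD' : ∀ i, M' i i ∈ m * q := Fin.forall_fin_two.2 ⟨hx', hw'⟩
  have e : m * q * m = q * m ^ 2 := by ring
  have e' : m * (m * q) = q * m ^ 2 := by ring
  have e'' : m * q * (m * n) = q * m ^ 2 * n := by ring
  exact ⟨fun i j => mul_mem_of_mul_le (hD i) (Ideal.mul_le_left (hD' j)) e.le,
    fun i => mul_mem_of_mul_le (hD i) hy' e.le,
    mul_mem_of_mul_le hy (Ideal.mul_mono_right hnq hz') e'.le,
    fun i => mul_mem_of_mul_le (hD i) hz' e''.le⟩

theorem isUnit_of_span_eq {R : Type*} [CommRing R] [IsDomain R] {a b u : R} (ha : a ≠ 0)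
    (h : Ideal.span {a} = Ideal.span {b}) (hb : b = a * u) : IsUnit u := by
  rw [Ideal.span_singleton_eq_span_singleton, hb] at h
  obtain ⟨v, hv⟩ := h
  rw [← mul_left_cancel₀ ha hv]
  exact v.isUnit

theorem IsWMatrix.exists_mul_right (hnq : n ≤ q) (h0 : M.det ≠ 0) (hM : IsWMatrix n q m M)
    (hM' : IsWMatrix n q m M') :
    ∃ γ : Matrix (Fin 2) (Fin 2) (𝓞 K), IsUnit γ.det ∧ γ 1 0 ∈ n ∧ M' = M * γ := by
  obtain ⟨h1, h2, h3, h4⟩ := hM.products hnq hM'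
  obtain ⟨-, k2, k3, k4⟩ := hM'.products hnq hM
  have hd := hM.2.2.2.2
  obtain ⟨γ, hc, hγ⟩ : ∃ γ : Matrix (Fin 2) (Fin 2) (𝓞 K), γ 1 0 ∈ n ∧
      M.adjugate * M' = M.det • γ := by
    apply exists_eq_smul <;> rw [hd, Matrix.mul_apply, Fin.sum_univ_two, Matrix.adjugate_fin_two]
    · simpa [sub_eq_add_neg] using sub_mem (h1 1 0) h3
    · simpa [sub_eq_add_neg, mul_comm] using sub_mem (h2 1) (k2 1)
    · simpa [sub_eq_add_neg, mul_comm, add_comm] using sub_mem (h1 0 1) k3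
    · simpa [sub_eq_add_neg, mul_comm, add_comm] using sub_mem (h4 0) (k4 0)
  have hMγ : M' = M * γ := by
    apply smul_right_injective _ h0
    change M.det • M' = M.det • (M * γ)
    rw [← Matrix.mul_smul, ← hγ, ← mul_assoc, Matrix.mul_adjugate, Matrix.smul_mul, one_mul]
  refine ⟨γ, isUnit_of_span_eq h0 (hd.trans hM'.2.2.2.2.symm) ?_, hc, hMγ⟩
  rw [hMγ, Matrix.det_mul]

theorem IsWMatrix.exists_mul_left (hnq : n ≤ q) (h0 : M.det ≠ 0) (hM : IsWMatrix n q m M)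
    (hM' : IsWMatrix n q m M') :
    ∃ γ : Matrix (Fin 2) (Fin 2) (𝓞 K), IsUnit γ.det ∧ γ 1 0 ∈ n ∧ M' = γ * M := by
  obtain ⟨h1, h2, h3, h4⟩ := hM.products hnq hM'
  obtain ⟨-, k2, k3, k4⟩ := hM'.products hnq hM
  have hd := hM.2.2.2.2
  obtain ⟨γ, hc, hγ⟩ : ∃ γ : Matrix (Fin 2) (Fin 2) (𝓞 K), γ 1 0 ∈ n ∧
      M' * M.adjugate = M.det • γ := by
    apply exists_eq_smul <;> rw [hd, Matrix.mul_apply, Fin.sum_univ_two, Matrix.adjugate_fin_two]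
    · simpa [sub_eq_add_neg, mul_comm] using sub_mem (h1 1 0) k3
    · simpa [sub_eq_add_neg, mul_comm, add_comm] using sub_mem (h2 0) (k2 0)
    · simpa [sub_eq_add_neg, mul_comm, add_comm] using sub_mem (h1 0 1) h3
    · simpa [sub_eq_add_neg, mul_comm] using sub_mem (h4 1) (k4 1)
  have hMγ : M' = γ * M := by
    apply smul_right_injective _ h0
    change M.det • M' = M.det • (γ * M)
    rw [← Matrix.smul_mul, ← hγ, mul_assoc, Matrix.adjugate_mul, Matrix.mul_smul, mul_one]
  refine ⟨γ, isUnit_of_span_eq h0 (hd.trans hM'.2.2.2.2.symm) ?_, hc, hMγ⟩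
  rw [hMγ, Matrix.det_mul, mul_comm]

end Helpers

/-- If `M` is a `W_𝔮^𝔪`-matrix of level `𝔫`, then the set of all `W_𝔮^𝔪`-matrices of level
`𝔫` equals the left coset `M·Γ₀(𝔫)` and also the right coset `Γ₀(𝔫)·M`. -/
theorem WMatrix_set_eq_coset
    {K : Type*} [Field K] [NumberField K] (n : Ideal (𝓞 K)) (hn : n ≠ 0)
    (q q' m : Ideal (𝓞 K))
    (hqq' : n = q * q') (hcop : IsCoprime q q')
    (hm : m ≠ 0) (hprin : Submodule.IsPrincipal (q * m ^ 2))
    (M : Matrix (Fin 2) (Fin 2) (𝓞 K)) (hM : IsWMatrix n q m M) :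
    {M' : Matrix (Fin 2) (Fin 2) (𝓞 K) | IsWMatrix n q m M'} =
      {M' : Matrix (Fin 2) (Fin 2) (𝓞 K) |
        ∃ γ : Matrix (Fin 2) (Fin 2) (𝓞 K), IsUnit γ.det ∧ γ 1 0 ∈ n ∧ M' = M * γ} ∧
    {M' : Matrix (Fin 2) (Fin 2) (𝓞 K) | IsWMatrix n q m M'} =
      {M' : Matrix (Fin 2) (Fin 2) (𝓞 K) |
        ∃ γ : Matrix (Fin 2) (Fin 2) (𝓞 K), IsUnit γ.det ∧ γ 1 0 ∈ n ∧ M' = γ * M} := by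
  have hnq : n ≤ q := hqq' ▸ Ideal.mul_le_left
  have h0 : M.det ≠ 0 := by
    intro h
    have hd := hM.2.2.2.2
    have hq : q ≠ 0 := by
      rintro rfl
      exact hn (by rw [hqq', zero_mul])
    rw [h, Ideal.span_singleton_zero] at hd
    exact mul_ne_zero hq (pow_ne_zero 2 hm) hd.symm
  constructor <;> ext M' <;> constructor
  · exact fun h => hM.exists_mul_right hnq h0 h
  · rintro ⟨γ, hγ, hc, rfl⟩
    exact hM.mul_right hnq hγ hc
  · exact fun h => hM.exists_mul_left hnq h0 h
  · rintro ⟨γ, hγ, hc, rfl⟩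
    exact hM.mul_left hnq hγ hc
end

section
/- Let K be a number field with ring of integers 𝓞_K. Let 𝔟₁, 𝔟₂ and 𝔫 be nonzero integral ideals of 𝓞_K. Then there exist elements x, y, z, w of K with x ∈ 𝔟₂⁻¹, y ∈ 𝔟₁⁻¹, z ∈ 𝔫𝔟₁, w ∈ 𝔟₂ (where 𝔟ᵢ⁻¹ denotes the inverse fractional ideal), such that xw − yz = 1. Equivalently, there is a 2×2 matrix over K with determinant 1 whose entries lie respectively in 𝔟₂⁻¹, 𝔟₁⁻¹, 𝔫𝔟₁, 𝔟₂. -/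
open NumberField
open scoped nonZeroDivisors

/-!
Choose any nonzero `z ∈ 𝔫𝔟₁` and write `(z) = 𝔟₁𝔠` with `𝔠` integral. Since `𝔠𝔟₂ ⊆ 𝔟₂` is
nonzero, `𝔟₂` is generated by `𝔠𝔟₂` together with one further element `w`
(`IsDedekindDomain.exists_sup_span_eq`). Writing `(w) = 𝔟₂𝔡` and cancelling `𝔟₂` gives
`𝔠 + 𝔡 = (1)`, so `u + v = 1` with `u ∈ 𝔠 = z𝔟₁⁻¹` and `v ∈ 𝔡 = w𝔟₂⁻¹`. Dividing,
`y = -u/z` and `x = v/w` are the remaining entries.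
-/

/-- If `(a) = 𝔟𝔠`, then `𝔠 ⊆ a𝔟⁻¹`. The case `a = 0` is allowed, since then `𝔠 = 0`. -/
lemma exists_mem_inv_mul_eq {K : Type*} [Field K] [NumberField K] {b c : Ideal (𝓞 K)}
    (hb : b ≠ 0) {a u : 𝓞 K} (h : Ideal.span {a} = b * c) (hu : u ∈ c) :
    ∃ x : K, x ∈ (b : FractionalIdeal (𝓞 K)⁰ K)⁻¹ ∧ x * (a : K) = u := by
  by_cases ha : a = 0
  · have hc : c = 0 := by
      have h0 : b * c = 0 := by rw [← h, ha]; simp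
      exact (mul_eq_zero.mp h0).resolve_left hb
    have hu0 : u = 0 := by rw [hc] at hu; simpa using hu
    exact ⟨0, FractionalIdeal.zero_mem _, by simp [hu0]⟩
  · have ha' : (a : K) ≠ 0 := by simpa using ha
    refine ⟨u / a, ?_, div_mul_cancel₀ _ ha'⟩
    rw [FractionalIdeal.mem_inv_iff (FractionalIdeal.coeIdeal_ne_zero.mpr hb)]
    intro t ht
    obtain ⟨t, htb, rfl⟩ := (FractionalIdeal.mem_coeIdeal _).mp ht
    have hm : t * u ∈ Ideal.span {a} := h ▸ Ideal.mul_mem_mul htb hu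
    obtain ⟨s, hs⟩ := Ideal.mem_span_singleton'.mp hm
    refine (FractionalIdeal.mem_one_iff _).mpr ⟨s, ?_⟩
    have hs' : (s : K) * a = t * u := by exact_mod_cast congrArg (algebraMap (𝓞 K) K) hs
    rw [div_mul_eq_mul_div, eq_div_iff ha', mul_comm (u : K)]
    exact hs'

/-- For nonzero integral ideals `𝔟₁, 𝔟₂, 𝔫` of the ring of integers of a number field `K`,
there is a 2×2 matrix over `K` with determinant 1 whose entries lie respectively in
`𝔟₂⁻¹`, `𝔟₁⁻¹`, `𝔫𝔟₁`, `𝔟₂`. -/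
theorem exists_det_one_matrix_with_ideal_entries
    {K : Type*} [Field K] [NumberField K] (b₁ b₂ n : Ideal (𝓞 K))
    (hb₁ : b₁ ≠ 0) (hb₂ : b₂ ≠ 0) (hn : n ≠ 0) :
    ∃ x y z w : K,
      x ∈ ((b₂ : FractionalIdeal (𝓞 K)⁰ K))⁻¹ ∧
      y ∈ ((b₁ : FractionalIdeal (𝓞 K)⁰ K))⁻¹ ∧
      z ∈ ((n * b₁ : Ideal (𝓞 K)) : FractionalIdeal (𝓞 K)⁰ K) ∧
      w ∈ ((b₂ : Ideal (𝓞 K)) : FractionalIdeal (𝓞 K)⁰ K) ∧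
      x * w - y * z = 1 := by
  obtain ⟨z, hz, hz0⟩ := Submodule.exists_mem_ne_zero_of_ne_bot (mul_ne_zero hn hb₁)
  obtain ⟨c, hc⟩ := Ideal.dvd_span_singleton.mpr (Ideal.mul_le_right hz)
  have hc0 : c ≠ 0 := by
    rintro rfl
    exact hz0 (Ideal.span_singleton_eq_bot.mp (by simpa using hc))
  obtain ⟨w, hw⟩ := IsDedekindDomain.exists_sup_span_eq
    (Ideal.mul_le_left : b₂ * c ≤ b₂) (mul_ne_zero hb₂ hc0)
  have hwb : w ∈ b₂ := by
    have h : Ideal.span {w} ≤ b₂ := hw ▸ le_sup_right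
    exact h (Ideal.mem_span_singleton_self w)
  obtain ⟨d, hd⟩ := Ideal.dvd_span_singleton.mpr hwb
  have hcd : c ⊔ d = ⊤ := by
    rw [hd, ← Ideal.mul_sup] at hw
    rw [← Ideal.one_eq_top]
    exact mul_left_cancel₀ hb₂ (by rw [hw, mul_one])
  obtain ⟨u, hu, v, hv, huv⟩ := Submodule.mem_sup.mp (hcd ▸ Submodule.mem_top : (1 : 𝓞 K) ∈ c ⊔ d)
  obtain ⟨y, hy, hyz⟩ := exists_mem_inv_mul_eq hb₁ hc hu
  obtain ⟨x, hx, hxw⟩ := exists_mem_inv_mul_eq hb₂ hd hv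
  refine ⟨x, -y, z, w, hx, Submodule.neg_mem _ hy, FractionalIdeal.mem_coeIdeal_of_mem _ hz,
    FractionalIdeal.mem_coeIdeal_of_mem _ hwb, ?_⟩
  have huv' : (u : K) + v = 1 := by exact_mod_cast congrArg (algebraMap (𝓞 K) K) huv
  rw [neg_mul, sub_neg_eq_add, hxw, hyz, add_comm, huv']
end

section
/- Let K be a number field with ring of integers 𝓞_K and 𝔫 a nonzero ideal. Let c, d ∈ 𝓞_K be such that the ideal generated by c and d together with 𝔫 is all of 𝓞_K, i.e. ⟨c, d⟩ + 𝔫 = 𝓞_K. Then there exist c', d' ∈ 𝓞_K with ⟨c', d'⟩ = 𝓞_K and cd' − c'd ∈ 𝔫. -/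
/-!
The pair `(c, d)` itself is lifted: `c' ≡ c` and `d' ≡ d` modulo `𝔫` with `⟨c', d'⟩ = 𝓞_K`, which
gives `cd' - c'd ∈ 𝔫`. Take `c'` to be any nonzero element of `c + 𝔫`; only finitely many maximal
ideals contain it. Prime avoidance then yields `e ∈ 𝔫` lying in every such ideal that does not
contain `d` and outside every such ideal that does (`𝔫` is contained in none of the latter because
`⟨c', d⟩ + 𝔫 = 𝓞_K`). Hence `d' = d + e` lies in no maximal ideal containing `c'`.
-/

open NumberField

/-- A unimodular row modulo `n` with nonzero first entry lifts to a unimodular row by changing only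
the second entry by an element of `n`. -/
theorem exists_mem_span_pair_add_eq_top {R : Type*} [CommRing R] [IsDedekindDomain R]
    (n : Ideal R) (c d : R) (hc : c ≠ 0) (h : Ideal.span {c, d} ⊔ n = ⊤) :
    ∃ e ∈ n, Ideal.span {c, d + e} = ⊤ := by
  classical
  have hfin : {v : IsDedekindDomain.HeightOneSpectrum R | c ∈ v.asIdeal}.Finite := by
    have := Ideal.finite_factors (I := Ideal.span {c}) (by simpa using hc)
    simpa [Ideal.dvd_span_singleton] using this
  obtain ⟨S, hmemS⟩ : ∃ S : Finset (IsDedekindDomain.HeightOneSpectrum R),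
      ∀ v, v ∈ S ↔ c ∈ v.asIdeal := ⟨hfin.toFinset, fun v => by simp⟩
  obtain ⟨J, hJ⟩ : ∃ J : Ideal R,
      J = n ⊓ (S.filter (fun v => d ∉ v.asIdeal)).inf (fun v => v.asIdeal) := ⟨_, rfl⟩
  obtain ⟨e, heJ, he⟩ : ∃ e ∈ J, ∀ v ∈ S, d ∈ v.asIdeal → e ∉ v.asIdeal := by
    by_contra! hcon
    have havoid : ∃ v ∈ S.filter (fun v => d ∈ v.asIdeal), J ≤ v.asIdeal := by
      obtain ⟨v₀, -⟩ := hcon 0 J.zero_mem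
      refine (Ideal.subset_union_prime
        (f := fun v : IsDedekindDomain.HeightOneSpectrum R => v.asIdeal) v₀ v₀
        (fun v _ _ _ => v.isPrime)).1 ?_
      intro e he
      obtain ⟨v, hv, hd, hev⟩ := hcon e he
      simp only [Set.mem_iUnion]
      exact ⟨v, by simp [hv, hd], hev⟩
    obtain ⟨v, hv, hle⟩ := havoid
    rw [Finset.mem_filter, hmemS] at hv
    rw [hJ] at hle
    rcases (v.isPrime.inf_le).1 hle with hn | hle
    · refine v.isPrime.ne_top (top_le_iff.1 (h.ge.trans (sup_le ?_ hn)))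
      rw [Ideal.span_le]
      rintro x (rfl | rfl)
      exacts [hv.1, hv.2]
    · obtain ⟨w, hw, hwv⟩ := (v.isPrime.inf_le').1 hle
      rw [Finset.mem_filter] at hw
      have hwv' := w.isMaximal.eq_of_le v.isPrime.ne_top hwv
      exact hw.2 (by rw [hwv']; exact hv.2)
  rw [hJ] at heJ
  refine ⟨e, heJ.1, ?_⟩
  by_contra hne
  obtain ⟨M, hM, hle⟩ := Ideal.exists_le_maximal _ hne
  have hcM : c ∈ M := hle (Ideal.subset_span (by simp))
  have hdM : d + e ∈ M := hle (Ideal.subset_span (by simp))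
  obtain ⟨v, rfl⟩ : ∃ v : IsDedekindDomain.HeightOneSpectrum R, v.asIdeal = M :=
    ⟨⟨M, hM.isPrime, fun h0 => hc (by simpa [h0] using hcM)⟩, rfl⟩
  have hvS : v ∈ S := (hmemS v).2 hcM
  by_cases hd : d ∈ v.asIdeal
  · exact he v hvS hd ((v.asIdeal.add_mem_iff_right hd).1 hdM)
  · have heM : e ∈ v.asIdeal :=
      (Finset.inf_le (f := fun v : IsDedekindDomain.HeightOneSpectrum R => v.asIdeal)
        (Finset.mem_filter.2 ⟨hvS, hd⟩)) heJ.2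
    exact hd ((v.asIdeal.add_mem_iff_left heM).1 hdM)

/-- If `c, d ∈ 𝓞_K` satisfy `⟨c, d⟩ + 𝔫 = 𝓞_K`, then there exist `c', d' ∈ 𝓞_K` with
`⟨c', d'⟩ = 𝓞_K` and `cd' - c'd ∈ 𝔫`. -/
theorem exists_coprime_lift_of_M_symbol
    {K : Type*} [Field K] [NumberField K] (n : Ideal (𝓞 K)) (hn : n ≠ 0)
    (c d : 𝓞 K) (h : Ideal.span {c, d} + n = ⊤) :
    ∃ c' d' : 𝓞 K, Ideal.span {c', d'} = ⊤ ∧ c * d' - c' * d ∈ n := by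
  -- Replace `c` by a nonzero representative of its class modulo `n`.
  obtain ⟨m, hm, hcm⟩ : ∃ m ∈ n, c + m ≠ 0 := by
    by_cases hc : c = 0
    · obtain ⟨m, hm, hm0⟩ := Submodule.exists_mem_ne_zero_of_ne_bot hn
      exact ⟨m, hm, by simpa [hc] using hm0⟩
    · exact ⟨0, n.zero_mem, by simpa using hc⟩
  have h' : Ideal.span {c + m, d} ⊔ n = ⊤ := by
    rw [← top_le_iff, ← h]
    refine sup_le ?_ le_sup_right
    rw [Ideal.span_le]
    rintro x (rfl | rfl)
    · have h1 : x + m ∈ Ideal.span {x + m, d} ⊔ n :=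
        Ideal.mem_sup_left (Ideal.subset_span (by simp))
      exact (Ideal.add_mem_iff_left _ (Ideal.mem_sup_right hm)).1 h1
    · exact Ideal.mem_sup_left (Ideal.subset_span (by simp))
  obtain ⟨e, he, htop⟩ := exists_mem_span_pair_add_eq_top n (c + m) d hcm h'
  refine ⟨c + m, d + e, htop, ?_⟩
  have : c * (d + e) - (c + m) * d = c * e - d * m := by ring
  rw [this]
  exact n.sub_mem (n.mul_mem_left _ he) (n.mul_mem_left _ hm)
end

section
/- Let K be a number field with ring of integers 𝓞_K and 𝔫 a nonzero ideal. For a 2×2 matrix γ over K and ideals 𝔞, 𝔟 of 𝓞_K, let (𝔞 ⊕ 𝔟)γ denote the 𝓞_K-submodule {(x, y)·γ : x ∈ 𝔞, y ∈ 𝔟} of K² (row vectors acted on the right). Then the following are equivalent for γ ∈ GL(2, K): (i) (𝓞_K ⊕ 𝓞_K)γ = 𝓞_K ⊕ 𝓞_K and (𝔫 ⊕ 𝓞_K)γ = 𝔫 ⊕ 𝓞_K; (ii) all entries of γ lie in 𝓞_K, det γ is a unit of 𝓞_K, and the lower-left entry of γ lies in 𝔫 (i.e. γ ∈ Γ₀(𝔫)).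 -/
/-!
Every vector of `𝔞 ⊕ 𝔟` is the image of a unique integral vector, so everything can be computed
over `𝓞_K`.

If `γ` stabilizes `𝓞_K ⊕ 𝓞_K`, its rows, being the images of the standard basis vectors, are
integral, so `γ` comes from an integral matrix `g`. The basis vectors themselves have integral
preimages, which are the rows of an integral left inverse of `g`; hence `det g` is a unit. Since
`(0, 1) ∈ 𝔫 ⊕ 𝓞_K`, its image, the lower row of `g`, lies in `𝔫 ⊕ 𝓞_K`, so `g 1 0 ∈ 𝔫`.

Conversely, an integral `g` with `g 1 0 ∈ 𝔫` maps `𝔫 ⊕ 𝓞_K` into itself. The inverse of an element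
of `Γ₀(𝔫)` is again in `Γ₀(𝔫)`, by the adjugate formula, so the inclusion is an equality. The
lattice `𝓞_K ⊕ 𝓞_K` is the case `𝔫 = 𝓞_K`.
-/

open NumberField

variable (K : Type*) [Field K] [NumberField K]

/-- The `𝓞_K`-submodule `𝔞 ⊕ 𝔟` of `K²` (row vectors), for ideals `𝔞, 𝔟` of `𝓞_K`. -/
noncomputable def idealPair (a b : Ideal (𝓞 K)) : Submodule (𝓞 K) (Fin 2 → K) :=
  Submodule.pi Set.univ
    ![Submodule.map (Algebra.linearMap (𝓞 K) K) a,
      Submodule.map (Algebra.linearMap (𝓞 K) K) b]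

/-- The image `L·γ` of an `𝓞_K`-submodule `L` of `K²` under right multiplication by a
2×2 matrix `γ` over `K` (acting on row vectors). -/
noncomputable def latAct (γ : Matrix (Fin 2) (Fin 2) K)
    (L : Submodule (𝓞 K) (Fin 2 → K)) : Submodule (𝓞 K) (Fin 2 → K) :=
  Submodule.map (LinearMap.restrictScalars (𝓞 K) (Matrix.vecMulLinear γ)) L

theorem mem_idealPair_iff (a b : Ideal (𝓞 K)) (v : Fin 2 → K) :
    v ∈ idealPair K a b ↔
      ∃ w : Fin 2 → 𝓞 K, w 0 ∈ a ∧ w 1 ∈ b ∧ algebraMap (𝓞 K) K ∘ w = v := by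
  simp only [idealPair, Submodule.mem_pi, Set.mem_univ, forall_const, Fin.forall_fin_two,
    Matrix.cons_val_zero, Matrix.cons_val_one, Submodule.mem_map, Algebra.linearMap_apply]
  constructor
  · rintro ⟨⟨x, hx, hx'⟩, ⟨y, hy, hy'⟩⟩
    refine ⟨![x, y], hx, hy, ?_⟩
    ext i
    fin_cases i
    · exact hx'
    · exact hy'
  · rintro ⟨w, h0, h1, rfl⟩
    exact ⟨⟨w 0, h0, rfl⟩, ⟨w 1, h1, rfl⟩⟩

theorem mem_latAct_idealPair_iff (a b : Ideal (𝓞 K)) (γ : Matrix (Fin 2) (Fin 2) K)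
    (v : Fin 2 → K) :
    v ∈ latAct K γ (idealPair K a b) ↔
      ∃ w : Fin 2 → 𝓞 K, w 0 ∈ a ∧ w 1 ∈ b ∧
        Matrix.vecMul (algebraMap (𝓞 K) K ∘ w) γ = v := by
  simp only [latAct, Submodule.mem_map, mem_idealPair_iff]
  constructor
  · rintro ⟨_, ⟨w, h0, h1, rfl⟩, h⟩
    exact ⟨w, h0, h1, h⟩
  · rintro ⟨w, h0, h1, h⟩
    exact ⟨_, ⟨w, h0, h1, rfl⟩, h⟩

theorem algebraMap_comp_vecMul (w : Fin 2 → 𝓞 K) (g : Matrix (Fin 2) (Fin 2) (𝓞 K)) :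
    algebraMap (𝓞 K) K ∘ Matrix.vecMul w g =
      Matrix.vecMul (algebraMap (𝓞 K) K ∘ w) (g.map (algebraMap (𝓞 K) K)) := by
  ext i
  exact RingHom.map_vecMul (algebraMap (𝓞 K) K) g w i

theorem vecMul_zero_mem {R : Type*} [CommRing R] {n : Ideal R} {g : Matrix (Fin 2) (Fin 2) R}
    (hg : g 1 0 ∈ n) {w : Fin 2 → R} (hw : w 0 ∈ n) : Matrix.vecMul w g 0 ∈ n := by
  simp only [Matrix.vecMul, dotProduct, Fin.sum_univ_two]
  exact n.add_mem (n.mul_mem_right _ hw) (n.mul_mem_left _ hg)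

/-- By the adjugate formula the lower-left entry of `g⁻¹` is a multiple of that of `g`. No
hypothesis on `det g` is needed, since `g⁻¹ = 0` when `det g` is not a unit. -/
theorem inv_one_zero_mem {R : Type*} [CommRing R] {n : Ideal R} {g : Matrix (Fin 2) (Fin 2) R}
    (hg : g 1 0 ∈ n) : g⁻¹ 1 0 ∈ n := by
  rw [Matrix.inv_def, Matrix.adjugate_fin_two]
  simpa using n.mul_mem_left (Ring.inverse g.det) hg

theorem latAct_map_idealPair_eq (n : Ideal (𝓞 K)) (g : Matrix (Fin 2) (Fin 2) (𝓞 K))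
    (hdet : IsUnit g.det) (hg : g 1 0 ∈ n) :
    latAct K (g.map (algebraMap (𝓞 K) K)) (idealPair K n ⊤) = idealPair K n ⊤ := by
  ext v
  rw [mem_latAct_idealPair_iff, mem_idealPair_iff]
  constructor
  · rintro ⟨w, h0, -, rfl⟩
    exact ⟨Matrix.vecMul w g, vecMul_zero_mem hg h0, trivial, algebraMap_comp_vecMul K w g⟩
  · rintro ⟨w, h0, -, rfl⟩
    refine ⟨Matrix.vecMul w g⁻¹, vecMul_zero_mem (inv_one_zero_mem hg) h0, trivial, ?_⟩
    rw [← algebraMap_comp_vecMul, Matrix.vecMul_vecMul, Matrix.nonsing_inv_mul g hdet,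
      Matrix.vecMul_one]

theorem algebraMap_comp_single_one (i : Fin 2) :
    algebraMap (𝓞 K) K ∘ (Pi.single i 1 : Fin 2 → 𝓞 K) = Pi.single i 1 := by
  ext j
  by_cases h : j = i
  · subst h; simp
  · simp [h]

/-- A matrix `γ ∈ GL(2, K)` satisfies `(𝓞_K ⊕ 𝓞_K)γ = 𝓞_K ⊕ 𝓞_K` and `(𝔫 ⊕ 𝓞_K)γ = 𝔫 ⊕ 𝓞_K`
if and only if `γ` is integral with unit determinant and lower-left entry in `𝔫`,
i.e. `γ ∈ Γ₀(𝔫)`. -/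
theorem mem_Gamma0_iff_stabilizes_lattice_pair
    (n : Ideal (𝓞 K)) (hn : n ≠ 0)
    (γ : Matrix (Fin 2) (Fin 2) K) (hγ : IsUnit γ.det) :
    (latAct K γ (idealPair K ⊤ ⊤) = idealPair K ⊤ ⊤ ∧
     latAct K γ (idealPair K n ⊤) = idealPair K n ⊤)
    ↔ ∃ g : Matrix (Fin 2) (Fin 2) (𝓞 K),
        IsUnit g.det ∧ g 1 0 ∈ n ∧ g.map (algebraMap (𝓞 K) K) = γ := by
  have hinj : Function.Injective (algebraMap (𝓞 K) K) := RingOfIntegers.coe_injective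
  constructor
  · rintro ⟨h1, h2⟩
    have hrow : ∀ i, ∃ w : Fin 2 → 𝓞 K, algebraMap (𝓞 K) K ∘ w = γ.row i := by
      intro i
      have hmem : γ.row i ∈ latAct K γ (idealPair K ⊤ ⊤) := by
        rw [mem_latAct_idealPair_iff]
        refine ⟨Pi.single i 1, trivial, trivial, ?_⟩
        rw [algebraMap_comp_single_one, Matrix.single_one_vecMul]
      rw [h1, mem_idealPair_iff] at hmem
      obtain ⟨w, -, -, hw⟩ := hmem
      exact ⟨w, hw⟩
    choose g hg using hrow
    have hgγ : (Matrix.of g).map (algebraMap (𝓞 K) K) = γ := by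
      ext i j
      exact congrFun (hg i) j
    have hpre : ∀ i, ∃ w : Fin 2 → 𝓞 K, Matrix.vecMul w (Matrix.of g) = Pi.single i 1 := by
      intro i
      have hmem : (Pi.single i 1 : Fin 2 → K) ∈ idealPair K ⊤ ⊤ := by
        rw [mem_idealPair_iff]
        exact ⟨Pi.single i 1, trivial, trivial, algebraMap_comp_single_one K i⟩
      rw [← h1, mem_latAct_idealPair_iff] at hmem
      obtain ⟨w, -, -, hw⟩ := hmem
      refine ⟨w, hinj.comp_left ?_⟩
      beta_reduce
      rw [algebraMap_comp_vecMul, hgγ, hw, algebraMap_comp_single_one]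
    choose h hh using hpre
    have hmul : Matrix.of h * Matrix.of g = 1 := by
      ext i j
      have hij : (Matrix.of h * Matrix.of g) i j = (Pi.single i 1 : Fin 2 → 𝓞 K) j := by
        rw [Matrix.mul_apply_eq_vecMul]
        exact congrFun (hh i) j
      rw [hij, Matrix.one_apply, Pi.single_apply]
      simp only [eq_comm]
    refine ⟨Matrix.of g, Matrix.isUnit_det_of_left_inverse hmul, ?_, hgγ⟩
    have hmem : γ.row 1 ∈ latAct K γ (idealPair K n ⊤) := by
      rw [mem_latAct_idealPair_iff]
      refine ⟨Pi.single 1 1, by simp, trivial, ?_⟩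
      rw [algebraMap_comp_single_one, Matrix.single_one_vecMul]
    rw [h2, mem_idealPair_iff] at hmem
    obtain ⟨w, hw0, -, hw⟩ := hmem
    have hwg : w = g 1 := hinj.comp_left (hw.trans (hg 1).symm)
    rw [hwg] at hw0
    exact hw0
  · rintro ⟨g, hdet, hg, rfl⟩
    exact ⟨latAct_map_idealPair_eq K ⊤ g hdet trivial, latAct_map_idealPair_eq K n g hdet hg⟩
end

section
/- Let K be a number field with ring of integers 𝓞_K, and let K̂ = K ⊗_ℚ ℝ, with K embedded in K̂ via x ↦ x ⊗ 1. Let 𝔭 and 𝔮 be nonzero fractional ideals of K, and let L = 𝔮·(𝔭 ⊕ 𝓞_K) be the 𝓞_K-submodule of K̂² consisting of (the images of) all pairs (x, y) with x ∈ 𝔮𝔭 and y ∈ 𝔮. Then for U ∈ GL(2, K̂), one has L·U = L if and only if U is the image of a 2×2 matrix u over K whose diagonal entries lie in 𝓞_K, whose upper-right entry lies in 𝔭⁻¹, whose lower-left entry lies in 𝔭, and whose determinant is a unit of 𝓞_K. In particular this condition is independent of 𝔮. -/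
/-!
Write `L = 𝔮𝔭 ⊕ 𝔮`. The inclusion `L·U ⊆ L` alone already pins down the entries of `U`
(`latMap_le_iff`): applying `U` to `(a, 0)` and `(0, b)` with nonzero `a ∈ 𝔮𝔭`, `b ∈ 𝔮` shows that
the entries come from `K`, and an element `x ∈ K` with `x I ⊆ J` lies in `J I⁻¹`, which puts the
entries in `𝓞_K`, `𝔭⁻¹`, `𝔭`, `𝓞_K` respectively; the ideal `𝔮` cancels. These four conditions
force the determinant into `𝓞_K`, since `𝔭⁻¹ 𝔭 = 𝓞_K`.

Now `L·U = L` means that both `U` and `U⁻¹` map `L` into itself. If so, `det u` and `det u⁻¹` are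
integral with product `1`, so `det u` is a unit. Conversely, if `det u` is a unit, then
`u⁻¹ = (det u)⁻¹ • adj u` satisfies the same four conditions as `u`.
-/

open scoped TensorProduct
open NumberField

/-- The embedding `K → K̂ = K ⊗_ℚ ℝ`, as an `𝓞_K`-linear map. -/
noncomputable def embK (K : Type*) [Field K] [NumberField K] : K →ₗ[𝓞 K] (K ⊗[ℚ] ℝ) :=
  LinearMap.restrictScalars (𝓞 K) (Algebra.linearMap K (K ⊗[ℚ] ℝ))

/-- The `𝓞_K`-submodule `𝔞 ⊕ 𝔟` of `K̂²` (row vectors), for fractional ideals `𝔞, 𝔟`: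
the image of `{(x, y) : x ∈ 𝔞, y ∈ 𝔟}`. -/
noncomputable def fracPair (K : Type*) [Field K] [NumberField K]
    (a b : FractionalIdeal (nonZeroDivisors (𝓞 K)) K) :
    Submodule (𝓞 K) (Fin 2 → K ⊗[ℚ] ℝ) :=
  Submodule.pi Set.univ
    ![Submodule.map (embK K) (a : Submodule (𝓞 K) K),
      Submodule.map (embK K) (b : Submodule (𝓞 K) K)]

/-- The image `L·U` of an `𝓞_K`-submodule `L` of `K̂²` under right multiplication by a
2×2 matrix `U` over `K̂` (acting on row vectors). -/
noncomputable def latMap (K : Type*) [Field K] [NumberField K]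
    (U : Matrix (Fin 2) (Fin 2) (K ⊗[ℚ] ℝ))
    (L : Submodule (𝓞 K) (Fin 2 → K ⊗[ℚ] ℝ)) : Submodule (𝓞 K) (Fin 2 → K ⊗[ℚ] ℝ) :=
  Submodule.map (LinearMap.restrictScalars (𝓞 K) (Matrix.vecMulLinear U)) L

/-- The matrix `u` over `K` lies in the order `(𝓞_K, 𝔭⁻¹; 𝔭, 𝓞_K)` of `M₂(K)`. -/
def EntriesIn {K : Type*} [Field K] [NumberField K]
    (p : FractionalIdeal (nonZeroDivisors (𝓞 K)) K) (u : Matrix (Fin 2) (Fin 2) K) : Prop :=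
  u 0 0 ∈ (1 : FractionalIdeal (nonZeroDivisors (𝓞 K)) K) ∧
  u 1 1 ∈ (1 : FractionalIdeal (nonZeroDivisors (𝓞 K)) K) ∧
  u 0 1 ∈ p⁻¹ ∧ u 1 0 ∈ p

section

variable {K : Type*} [Field K] [NumberField K]

theorem algebraMap_tensor_injective :
    Function.Injective (algebraMap K (K ⊗[ℚ] ℝ)) :=
  (algebraMap K (K ⊗[ℚ] ℝ)).injective

theorem mem_fracPair_iff (a b : FractionalIdeal (nonZeroDivisors (𝓞 K)) K)
    (v : Fin 2 → K ⊗[ℚ] ℝ) :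
    v ∈ fracPair K a b ↔ (∃ x ∈ a, algebraMap K (K ⊗[ℚ] ℝ) x = v 0) ∧
      ∃ y ∈ b, algebraMap K (K ⊗[ℚ] ℝ) y = v 1 := by
  simp [fracPair, Submodule.mem_pi, Fin.forall_fin_two, embK]

theorem mem_mul_inv_of_forall {I J : FractionalIdeal (nonZeroDivisors (𝓞 K)) K} (hI : I ≠ 0)
    {x : K} (h : ∀ a ∈ I, a * x ∈ J) : x ∈ J * I⁻¹ := by
  have h1 : FractionalIdeal.spanSingleton (nonZeroDivisors (𝓞 K)) x * I ≤ J := by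
    rw [FractionalIdeal.spanSingleton_mul_le_iff]
    intro z hz
    rw [mul_comm]
    exact h z hz
  have h2 := mul_le_mul_left h1 I⁻¹
  rw [mul_assoc, mul_inv_cancel₀ hI, mul_one] at h2
  exact (FractionalIdeal.spanSingleton_le_iff_mem).1 h2

/-- An element of `K̂` that multiplies `I` into `J` comes from `J I⁻¹ ⊆ K`. -/
theorem exists_of_forall {I J : FractionalIdeal (nonZeroDivisors (𝓞 K)) K} (hI : I ≠ 0)
    {t : K ⊗[ℚ] ℝ}
    (h : ∀ a ∈ I, ∃ y ∈ J, algebraMap K (K ⊗[ℚ] ℝ) y = algebraMap K (K ⊗[ℚ] ℝ) a * t) :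
    ∃ x ∈ J * I⁻¹, algebraMap K (K ⊗[ℚ] ℝ) x = t := by
  obtain ⟨a, ha, ha0⟩ : ∃ a ∈ I, a ≠ 0 := by
    by_contra! h0
    exact hI (FractionalIdeal.eq_zero_iff.2 h0)
  obtain ⟨y, hy, hyt⟩ := h a ha
  have ht : algebraMap K (K ⊗[ℚ] ℝ) (a⁻¹ * y) = t := by
    rw [map_mul, hyt, ← mul_assoc, ← map_mul, inv_mul_cancel₀ ha0, map_one, one_mul]
  refine ⟨a⁻¹ * y, mem_mul_inv_of_forall hI fun b hb => ?_, ht⟩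
  obtain ⟨z, hz, hzt⟩ := h b hb
  rw [← ht, ← map_mul] at hzt
  rwa [← algebraMap_tensor_injective hzt]

theorem latMap_le_iff (p q : FractionalIdeal (nonZeroDivisors (𝓞 K)) K) (hp : p ≠ 0) (hq : q ≠ 0)
    (U : Matrix (Fin 2) (Fin 2) (K ⊗[ℚ] ℝ)) :
    latMap K U (fracPair K (q * p) q) ≤ fracPair K (q * p) q ↔
      ∃ u : Matrix (Fin 2) (Fin 2) K, EntriesIn p u ∧ U = u.map (algebraMap K (K ⊗[ℚ] ℝ)) := by
  have hqp : q * p ≠ 0 := mul_ne_zero hq hp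
  rw [latMap, Submodule.map_le_iff_le_comap]
  constructor
  · intro h
    have h0 : ∀ a ∈ q * p, _ := fun a ha =>
      (mem_fracPair_iff _ _ _).1 (h ((mem_fracPair_iff (q * p) q
        ![algebraMap K (K ⊗[ℚ] ℝ) a, 0]).2 ⟨⟨a, ha, rfl⟩, 0, Submodule.zero_mem _, map_zero _⟩))
    have h1 : ∀ b ∈ q, _ := fun b hb =>
      (mem_fracPair_iff _ _ _).1 (h ((mem_fracPair_iff (q * p) q
        ![0, algebraMap K (K ⊗[ℚ] ℝ) b]).2 ⟨⟨0, Submodule.zero_mem _, map_zero _⟩, b, hb, rfl⟩))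
    simp only [LinearMap.coe_restrictScalars, Matrix.vecMulLinear_apply, Matrix.vecMul,
      dotProduct, Fin.sum_univ_two, Matrix.cons_val_zero, Matrix.cons_val_one, zero_mul,
      add_zero, zero_add] at h0 h1
    obtain ⟨x00, m00, e00⟩ := exists_of_forall hqp fun a ha => (h0 a ha).1
    obtain ⟨x01, m01, e01⟩ := exists_of_forall hqp fun a ha => (h0 a ha).2
    obtain ⟨x10, m10, e10⟩ := exists_of_forall hq fun a ha => (h1 a ha).1
    obtain ⟨x11, m11, e11⟩ := exists_of_forall hq fun a ha => (h1 a ha).2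
    rw [mul_inv_cancel₀ hqp] at m00
    rw [mul_inv_cancel₀ hq] at m11
    rw [mul_inv, ← mul_assoc, mul_inv_cancel₀ hq, one_mul] at m01
    rw [mul_comm q p, mul_assoc, mul_inv_cancel₀ hq, mul_one] at m10
    refine ⟨!![x00, x01; x10, x11], ⟨m00, m11, m01, m10⟩, ?_⟩
    ext i j
    fin_cases i <;> fin_cases j <;> simp [e00, e01, e10, e11]
  · rintro ⟨u, ⟨m00, m11, m01, m10⟩, rfl⟩ v hv
    obtain ⟨⟨x, hx, ex⟩, y, hy, ey⟩ := (mem_fracPair_iff _ _ _).1 hv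
    refine (mem_fracPair_iff _ _ _).2 ⟨⟨x * u 0 0 + y * u 1 0, ?_, ?_⟩,
      x * u 0 1 + y * u 1 1, ?_, ?_⟩
    · refine Submodule.add_mem _ ?_ (FractionalIdeal.mul_mem_mul hy m10)
      have := FractionalIdeal.mul_mem_mul hx m00
      rwa [mul_one] at this
    · simp only [map_add, map_mul, ex, ey, LinearMap.coe_restrictScalars,
        Matrix.vecMulLinear_apply, Matrix.vecMul, dotProduct, Fin.sum_univ_two, Matrix.map_apply]
    · refine Submodule.add_mem _ ?_ (by simpa using FractionalIdeal.mul_mem_mul hy m11)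
      have := FractionalIdeal.mul_mem_mul hx m01
      rwa [mul_assoc, mul_inv_cancel₀ hp, mul_one] at this
    · simp only [map_add, map_mul, ex, ey, LinearMap.coe_restrictScalars,
        Matrix.vecMulLinear_apply, Matrix.vecMul, dotProduct, Fin.sum_univ_two, Matrix.map_apply]

theorem EntriesIn.det_mem {p : FractionalIdeal (nonZeroDivisors (𝓞 K)) K} (hp : p ≠ 0)
    {u : Matrix (Fin 2) (Fin 2) K} (h : EntriesIn p u) :
    u.det ∈ (1 : FractionalIdeal (nonZeroDivisors (𝓞 K)) K) := by
  obtain ⟨m00, m11, m01, m10⟩ := h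
  rw [Matrix.det_fin_two]
  refine Submodule.sub_mem _ ?_ ?_
  · simpa using FractionalIdeal.mul_mem_mul m00 m11
  · simpa [inv_mul_cancel₀ hp] using FractionalIdeal.mul_mem_mul m01 m10

theorem latMap_latMap (U V : Matrix (Fin 2) (Fin 2) (K ⊗[ℚ] ℝ))
    (L : Submodule (𝓞 K) (Fin 2 → K ⊗[ℚ] ℝ)) :
    latMap K V (latMap K U L) = latMap K (U * V) L := by
  rw [latMap, latMap, latMap, ← Submodule.map_comp]
  congr 1
  refine LinearMap.ext fun v => ?_
  simp [Matrix.vecMul_vecMul]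

theorem latMap_one (L : Submodule (𝓞 K) (Fin 2 → K ⊗[ℚ] ℝ)) : latMap K 1 L = L := by
  have : LinearMap.restrictScalars (𝓞 K)
      (Matrix.vecMulLinear (1 : Matrix (Fin 2) (Fin 2) (K ⊗[ℚ] ℝ))) = LinearMap.id := by
    refine LinearMap.ext fun v => ?_
    simp
  rw [latMap, this, Submodule.map_id]

theorem latMap_eq_iff_le_and_le (U : GL (Fin 2) (K ⊗[ℚ] ℝ))
    (L : Submodule (𝓞 K) (Fin 2 → K ⊗[ℚ] ℝ)) :
    latMap K (U : Matrix (Fin 2) (Fin 2) (K ⊗[ℚ] ℝ)) L = L ↔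
      latMap K (U : Matrix (Fin 2) (Fin 2) (K ⊗[ℚ] ℝ)) L ≤ L ∧
      latMap K ((U⁻¹ : GL (Fin 2) (K ⊗[ℚ] ℝ)) : Matrix (Fin 2) (Fin 2) (K ⊗[ℚ] ℝ)) L ≤ L := by
  constructor
  · intro h
    refine ⟨h.le, ?_⟩
    conv_lhs => rw [← h]
    rw [latMap_latMap, Units.mul_inv, latMap_one]
  · rintro ⟨h1, h2⟩
    refine le_antisymm h1 ?_
    have h3 : latMap K (U : Matrix (Fin 2) (Fin 2) (K ⊗[ℚ] ℝ)) (latMap K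
        ((U⁻¹ : GL (Fin 2) (K ⊗[ℚ] ℝ)) : Matrix (Fin 2) (Fin 2) (K ⊗[ℚ] ℝ)) L) ≤
        latMap K (U : Matrix (Fin 2) (Fin 2) (K ⊗[ℚ] ℝ)) L := Submodule.map_mono h2
    rwa [latMap_latMap, Units.inv_mul, latMap_one] at h3

end

/-- For nonzero fractional ideals `𝔭, 𝔮` and the lattice `L = 𝔮(𝔭 ⊕ 𝓞_K) = 𝔮𝔭 ⊕ 𝔮` in
`K̂²`, a matrix `U ∈ GL(2, K̂)` satisfies `L·U = L` if and only if `U` is the image of a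
2×2 matrix `u` over `K` with diagonal entries in `𝓞_K`, upper-right entry in `𝔭⁻¹`,
lower-left entry in `𝔭`, and determinant a unit of `𝓞_K`.  In particular the condition is
independent of `𝔮`. -/
theorem latMap_eq_self_iff
    {K : Type*} [Field K] [NumberField K]
    (p q : FractionalIdeal (nonZeroDivisors (𝓞 K)) K) (hp : p ≠ 0) (hq : q ≠ 0)
    (U : GL (Fin 2) (K ⊗[ℚ] ℝ)) :
    latMap K (U : Matrix (Fin 2) (Fin 2) (K ⊗[ℚ] ℝ)) (fracPair K (q * p) q)
        = fracPair K (q * p) q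
    ↔ ∃ u : Matrix (Fin 2) (Fin 2) K,
        u 0 0 ∈ (1 : FractionalIdeal (nonZeroDivisors (𝓞 K)) K) ∧
        u 1 1 ∈ (1 : FractionalIdeal (nonZeroDivisors (𝓞 K)) K) ∧
        u 0 1 ∈ p⁻¹ ∧ u 1 0 ∈ p ∧
        (∃ e : (𝓞 K)ˣ, algebraMap (𝓞 K) K e = u.det) ∧
        (U : Matrix (Fin 2) (Fin 2) (K ⊗[ℚ] ℝ)) = u.map (algebraMap K (K ⊗[ℚ] ℝ)) := by
  rw [latMap_eq_iff_le_and_le, latMap_le_iff p q hp hq, latMap_le_iff p q hp hq]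
  constructor
  · rintro ⟨⟨u, hu, hU⟩, v, hv, hV⟩
    have huv : u * v = 1 := by
      apply Matrix.map_injective (algebraMap_tensor_injective (K := K))
      beta_reduce
      rw [Matrix.map_mul, ← hU, ← hV, Units.mul_inv, Matrix.map_one _ (map_zero _) (map_one _)]
    obtain ⟨a, ha⟩ := (FractionalIdeal.mem_one_iff _).1 (hu.det_mem hp)
    obtain ⟨b, hb⟩ := (FractionalIdeal.mem_one_iff _).1 (hv.det_mem hp)
    have hab : a * b = 1 := by
      apply FaithfulSMul.algebraMap_injective (𝓞 K) K
      rw [map_mul, ha, hb, ← Matrix.det_mul, huv, Matrix.det_one, map_one]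
    exact ⟨u, hu.1, hu.2.1, hu.2.2.1, hu.2.2.2,
      ⟨⟨a, b, hab, by rw [mul_comm, hab]⟩, ha⟩, hU⟩
  · rintro ⟨u, m00, m11, m01, m10, ⟨e, he⟩, hU⟩
    refine ⟨⟨u, ⟨m00, m11, m01, m10⟩, hU⟩, ((e⁻¹ : (𝓞 K)ˣ) : 𝓞 K) • u.adjugate, ?_, ?_⟩
    · rw [Matrix.adjugate_fin_two]
      exact ⟨Submodule.smul_mem _ _ m11, Submodule.smul_mem _ _ m00,
        Submodule.smul_mem _ _ (Submodule.neg_mem _ m01), Submodule.smul_mem _ _ (Submodule.neg_mem _ m10)⟩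
    · have huv : u * (((e⁻¹ : (𝓞 K)ˣ) : 𝓞 K) • u.adjugate) = 1 := by
        rw [Matrix.mul_smul, Matrix.mul_adjugate, ← he, algebraMap_smul, smul_smul,
          Units.inv_mul, one_smul]
      have h2 := congrArg (fun m => m.map (algebraMap K (K ⊗[ℚ] ℝ))) huv
      simp only [Matrix.map_mul, ← hU] at h2
      rw [Matrix.map_one _ (map_zero _) (map_one _)] at h2
      exact Units.inv_eq_of_mul_eq_one_right h2
end

section
/- Let K be a number field with ring of integers 𝓞_K, K̂ = K ⊗_ℚ ℝ, and 𝔫 a nonzero ideal. Let (L, L') be a modular point for Γ₀(𝔫) in K̂²: L and L' are 𝓞_K-lattices in K̂² with L ⊆ L' and L'/L isomorphic to 𝓞_K/𝔫 as an 𝓞_K-module. Let 𝔭 and 𝔮 be nonzero fractional ideals of K such that L is isomorphic as an 𝓞_K-module to 𝔭𝔮 ⊕ 𝔮. Then there exists U ∈ GL(2, K̂) such that L = (𝔮·(𝔭 ⊕ 𝓞_K))·U and L' = (𝔮·(𝔭 ⊕ 𝔫⁻¹))·U; that is, (L, L') admits an admissible basis matrix. -/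
/-!
Write the `𝓞_K`-isomorphism `𝔭𝔮 ⊕ 𝔮 ≅ L` as `(x, y) ↦ x·u₁ + y·u₂`; since `L` spans `K̂²` over
`K̂`, the rows `u₁, u₂` form an invertible matrix `V`. As `n·L' ⊆ L` and `n ≠ 0`, the lattice `L'`
lies in `K·u₁ + K·u₂`, so the problem takes place in `K²`: with `M = 𝔭𝔮 ⊕ 𝔮` and
`M' = M + 𝓞_K·m`, where `m` has annihilator `n` modulo `M`, one needs a matrix
`A = (α β; γ δ)` over `K` preserving `M` and carrying `𝔭𝔮 ⊕ 𝔮n⁻¹` to `M'`; then `U = A·V`.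

Such an `A` exists (`exists_adapted_matrix`). It is enough to have `α, δ ∈ 𝓞_K`, `β ∈ 𝔭⁻¹`,
`γ ∈ 𝔭`, `αδ - βγ = 1` and `M' = M + 𝔮n⁻¹·(γ, δ)`. Scale `m` by some `s` such that `s𝔮n⁻¹` is
integral and prime to `n` (`exists_scale_coprime`); then `(γ₀, δ₀) = s·m` lies in `𝔭 × 𝓞_K`,
satisfies `M' = M + 𝔮n⁻¹·(γ₀, δ₀)`, and the condition on the annihilator of `m` says that
`γ₀𝔭⁻¹ + δ₀𝓞_K + n = 𝓞_K`. Changing `γ₀` by `n𝔭` and `δ₀` by `n` does not affect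
`M + 𝔮n⁻¹·(γ₀, δ₀)`, and by prime avoidance (`exists_add_coprime`) it achieves
`γ𝔭⁻¹ + δ𝓞_K = 𝓞_K`, which supplies `α` and `β`.
-/

open scoped TensorProduct
open NumberField

set_option synthInstance.maxHeartbeats 1000000

/-- An `𝓞_K`-lattice in `K̂²`: a finitely generated `𝓞_K`-submodule whose `K̂`-span is all
of `K̂²` and whose `K`-span is a 2-dimensional `K`-vector space. -/
def IsLattice (K : Type*) [Field K] [NumberField K]
    (L : Submodule (𝓞 K) (Fin 2 → K ⊗[ℚ] ℝ)) : Prop :=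
  L.FG ∧ Submodule.span (K ⊗[ℚ] ℝ) (L : Set (Fin 2 → K ⊗[ℚ] ℝ)) = ⊤ ∧
    Module.finrank K (Submodule.span K (L : Set (Fin 2 → K ⊗[ℚ] ℝ))) = 2

/-! ### Fractional ideals of a Dedekind domain -/

section Dedekind

variable {R K : Type*} [CommRing R] [IsDedekindDomain R] [Field K] [Algebra R K]
  [IsFractionRing R K]

/-- Dedekind quotients `R/c`, `c ≠ 0`, have stable range one: an element `d` generating the unit
ideal together with `n` modulo `c` can be moved by an element of `n` to a unit modulo `c`. -/
lemma exists_add_coprime (c n : Ideal R) (hc : c ≠ 0) (d : R)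
    (h : c ⊔ Ideal.span {d} ⊔ n = ⊤) :
    ∃ t ∈ n, c ⊔ Ideal.span {d + t} = ⊤ := by
  classical
  -- `S` is the set of primes containing `c`; `t` must lie in those not containing `d`
  -- and avoid the others.
  set S : Finset (Ideal R) := (UniqueFactorizationMonoid.normalizedFactors c).toFinset with hS
  have memS : ∀ P, P ∈ S ↔ P.IsPrime ∧ c ≤ P := fun P => by
    rw [hS, Multiset.mem_toFinset, Ideal.mem_normalizedFactors_iff hc]
  have maxS : ∀ P ∈ S, P.IsMaximal := fun P hP => by
    obtain ⟨h1, h2⟩ := (memS P).1 hP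
    refine h1.isMaximal ?_
    rintro rfl
    exact hc (le_bot_iff.1 h2)
  set J : Ideal R := n * ∏ P ∈ S.filter (fun P => d ∉ P), P with hJ
  have key : ¬ ((J : Set R) ⊆ ⋃ P ∈ (↑(S.filter (fun P => d ∈ P)) : Set (Ideal R)), (P : Set R)) := by
    intro hsub
    have hsub' := (Ideal.subset_union_prime (f := id) ⊥ ⊥ (fun P hP _ _ =>
      ((memS P).1 (Finset.mem_filter.1 hP).1).1)).1 hsub
    obtain ⟨P, hP, hle⟩ := hsub'
    obtain ⟨hPS, hdP⟩ := Finset.mem_filter.1 hP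
    obtain ⟨hPp, hcP⟩ := (memS P).1 hPS
    rcases (Ideal.IsPrime.mul_le hPp).1 hle with h1 | h1
    · apply hPp.ne_top
      rw [eq_top_iff, ← h]
      exact sup_le (sup_le hcP ((Ideal.span_singleton_le_iff_mem P).2 hdP)) h1
    · obtain ⟨Q, hQ, hQP⟩ := (Ideal.IsPrime.prod_le hPp).1 h1
      obtain ⟨hQS, hdQ⟩ := Finset.mem_filter.1 hQ
      have := (maxS Q hQS).eq_of_le hPp.ne_top hQP
      exact hdQ (this ▸ hdP)
  obtain ⟨t, htJ, ht⟩ := Set.not_subset.1 key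
  refine ⟨t, Ideal.mul_le_left htJ, ?_⟩
  by_contra hne
  obtain ⟨P, hP, hle⟩ := Ideal.exists_le_maximal _ hne
  have hPS : P ∈ S := (memS P).2 ⟨hP.isPrime, le_sup_left.trans hle⟩
  have hdt : d + t ∈ P := hle (le_sup_right (a := c) (Ideal.mem_span_singleton_self _))
  by_cases hd : d ∈ P
  · apply ht
    simp only [Set.mem_iUnion]
    exact ⟨P, Finset.mem_coe.2 (Finset.mem_filter.2 ⟨hPS, hd⟩), (Ideal.add_mem_iff_right P hd).1 hdt⟩
  · have htP : t ∈ P := (Ideal.mul_le_right.trans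
      (Ideal.prod_le_inf.trans (Finset.inf_le (Finset.mem_filter.2 ⟨hPS, hd⟩)))) htJ
    exact hd ((Ideal.add_mem_iff_left P htP).1 hdt)

open FractionalIdeal in
/-- A fractional ideal `b` can be scaled to be integral and coprime to a given nonzero ideal. -/
lemma exists_scale_coprime (b : FractionalIdeal (nonZeroDivisors R) K) (hb : b ≠ 0)
    (n : Ideal R) (hn : n ≠ 0) :
    ∃ s : K, spanSingleton (nonZeroDivisors R) s * b +
      (n : FractionalIdeal (nonZeroDivisors R) K) = 1 := by
  obtain ⟨a, J, ha, hJ⟩ := exists_eq_spanSingleton_mul b⁻¹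
  have hJ0 : J ≠ 0 := by
    rintro rfl
    apply inv_ne_zero hb
    rw [hJ]; simp
  obtain ⟨z, hz⟩ := IsDedekindDomain.exists_sup_span_eq (I := n * J) (J := J) Ideal.mul_le_right
    (mul_ne_zero hn hJ0)
  refine ⟨(algebraMap R K a)⁻¹ * algebraMap R K z, ?_⟩
  have h2 : (n : FractionalIdeal (nonZeroDivisors R) K) * (J : FractionalIdeal (nonZeroDivisors R) K) +
      spanSingleton (nonZeroDivisors R) (algebraMap R K z) = J := by
    rw [← coeIdeal_mul, ← coeIdeal_span_singleton, ← coeIdeal_sup, hz]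
  have h3 : b⁻¹ * b = 1 := inv_mul_cancel₀ hb
  calc _ = spanSingleton _ ((algebraMap R K a)⁻¹) * spanSingleton _ (algebraMap R K z) * b
        + (n : FractionalIdeal (nonZeroDivisors R) K) * (b⁻¹ * b) := by
        rw [spanSingleton_mul_spanSingleton, h3, mul_one]
    _ = spanSingleton _ ((algebraMap R K a)⁻¹) * ((n : FractionalIdeal (nonZeroDivisors R) K) *
        (J : FractionalIdeal (nonZeroDivisors R) K) + spanSingleton _ (algebraMap R K z)) * b := by
        rw [hJ]; ring
    _ = 1 := by rw [h2, ← hJ, h3]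

open FractionalIdeal in
/-- The arithmetic core, in coordinates. Let `M = 𝔭𝔮 ⊕ 𝔮` and let `M' = M + R·(x₁, x₂)` where
`(x₁, x₂)` has annihilator `n` modulo `M`. Some matrix `(α β; γ δ)` of determinant one
carries `M` to itself and `𝔭𝔮 ⊕ 𝔮n⁻¹` to `M'`. -/
lemma exists_adapted_matrix (p q : FractionalIdeal (nonZeroDivisors R) K) (hp : p ≠ 0) (hq : q ≠ 0)
    (n : Ideal R) (hn : n ≠ 0) (x₁ x₂ : K)
    (hx : ∀ r : R, r ∈ n ↔ algebraMap R K r * x₁ ∈ q * p ∧ algebraMap R K r * x₂ ∈ q) :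
    ∃ α β γ δ : K, α * δ - β * γ = 1 ∧
      (∀ a b : K, (a ∈ q * p ∧ b ∈ q) ↔
        ∃ x ∈ q * p, ∃ y ∈ q, a = x * α + y * γ ∧ b = x * β + y * δ) ∧
      (∀ a b : K, (∃ r : R, a - algebraMap R K r * x₁ ∈ q * p ∧ b - algebraMap R K r * x₂ ∈ q) ↔
        ∃ x ∈ q * p, ∃ y ∈ q * (n : FractionalIdeal (nonZeroDivisors R) K)⁻¹,
          a = x * α + y * γ ∧ b = x * β + y * δ) := by
  set N : FractionalIdeal (nonZeroDivisors R) K := (n : FractionalIdeal (nonZeroDivisors R) K) with hN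
  have hN0 : N ≠ 0 := coeIdeal_ne_zero.2 hn
  have hN1 : N ≤ 1 := coeIdeal_le_one
  set b := q * N⁻¹ with hb
  have hb0 : b ≠ 0 := mul_ne_zero hq (inv_ne_zero hN0)
  have hbN : b * N = q := by rw [hb, mul_assoc, inv_mul_cancel₀ hN0, mul_one]
  have hqb : q ≤ b := by
    calc q = b * N := hbN.symm
      _ ≤ b * 1 := mul_le_mul_right hN1 b
      _ = b := mul_one b
  have add_mem' : ∀ (I : FractionalIdeal (nonZeroDivisors R) K) {x y : K},
      x ∈ I → y ∈ I → x + y ∈ I := fun I x y h1 h2 => (I : Submodule R K).add_mem h1 h2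
  have sub_mem' : ∀ (I : FractionalIdeal (nonZeroDivisors R) K) {x y : K},
      x ∈ I → y ∈ I → x - y ∈ I := fun I x y h1 h2 => (I : Submodule R K).sub_mem h1 h2
  have one_mul' : ∀ (I : FractionalIdeal (nonZeroDivisors R) K) {x y : K},
      x ∈ I → y ∈ (1 : FractionalIdeal (nonZeroDivisors R) K) → x * y ∈ I :=
    fun I x y h1 h2 => by simpa using mul_mem_mul h1 h2
  have hxN : ∀ m ∈ N, m * x₁ ∈ q * p ∧ m * x₂ ∈ q := by
    intro m hm
    obtain ⟨r, hr, rfl⟩ := (mem_coeIdeal _).1 hm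
    exact (hx r).1 hr
  -- `(γ₀, δ₀) = s·(x₁, x₂)`: modulo `M`, the module `b·(γ₀, δ₀)` equals `R·(x₁, x₂)`.
  obtain ⟨s, hs⟩ := exists_scale_coprime b hb0 n hn
  rw [← hN] at hs
  have hsb : ∀ y ∈ b, y * s ∈ (1 : FractionalIdeal (nonZeroDivisors R) K) := by
    intro y hy
    rw [← hs, mul_comm y s]
    have hle : spanSingleton (nonZeroDivisors R) s * b ≤ spanSingleton _ s * b + N :=
      le_add_of_nonneg_right zero_le
    exact hle (mul_mem_mul (mem_spanSingleton_self _ s) hy)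
  have hsq : ∀ y ∈ q, y * s ∈ N := by
    have : spanSingleton (nonZeroDivisors R) s * q ≤ N := by
      calc spanSingleton (nonZeroDivisors R) s * q
          = (spanSingleton (nonZeroDivisors R) s * b) * N := by rw [mul_assoc, hbN]
        _ ≤ 1 * N := mul_le_mul_left (by rw [← hs]; exact le_add_of_nonneg_right zero_le) N
        _ = N := one_mul N
    intro y hy
    rw [mul_comm y s]
    exact this (mul_mem_mul (mem_spanSingleton_self _ s) hy)
  have memdiv : ∀ (I : FractionalIdeal (nonZeroDivisors R) K) (z : K),
      (∀ y ∈ q, y * z ∈ q * I) → z ∈ I := by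
    intro I z h
    have h1 : spanSingleton (nonZeroDivisors R) z * q ≤ q * I := by
      rw [spanSingleton_mul_le_iff]
      intro y hy
      rw [mul_comm z y]; exact h y hy
    have h2 : spanSingleton (nonZeroDivisors R) z ≤ I := by
      calc spanSingleton (nonZeroDivisors R) z = spanSingleton (nonZeroDivisors R) z * q * q⁻¹ := by
            rw [mul_assoc, mul_inv_cancel₀ hq, mul_one]
        _ ≤ q * I * q⁻¹ := mul_le_mul_left h1 _
        _ = I := by rw [mul_comm q I, mul_assoc, mul_inv_cancel₀ hq, mul_one]
    exact h2 (mem_spanSingleton_self _ z)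
  have hγ₀ : s * x₁ ∈ p := memdiv p _ fun y hy => by
    rw [← mul_assoc]; exact (hxN _ (hsq y hy)).1
  have hδ₀ : s * x₂ ∈ (1 : FractionalIdeal (nonZeroDivisors R) K) := memdiv 1 _ fun y hy => by
    rw [← mul_assoc, mul_one]; exact (hxN _ (hsq y hy)).2
  -- `γ ≡ γ₀` modulo `np`, chosen nonzero so that `γp⁻¹` has finitely many prime divisors.
  obtain ⟨γ, hγne, hγ⟩ : ∃ γ : K, γ ≠ 0 ∧ γ - s * x₁ ∈ N * p := by
    by_cases h0 : s * x₁ = 0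
    · obtain ⟨z, hz, hz0⟩ := exists_ne_zero_mem_isInteger (mul_ne_zero hN0 hp)
      refine ⟨algebraMap R K z, by simpa using hz, ?_⟩
      rw [h0, sub_zero]; exact hz0
    · exact ⟨_, h0, by rw [sub_self]; exact (N * p).zero_mem⟩
  have hNp : N * p ≤ p := by simpa using mul_le_mul_left hN1 p
  have hγp : γ ∈ p := by simpa using add_mem' p (hNp hγ) hγ₀
  obtain ⟨c, hc⟩ : ∃ c : Ideal R, (c : FractionalIdeal (nonZeroDivisors R) K) =
      spanSingleton _ γ * p⁻¹ := by
    refine le_one_iff_exists_coeIdeal.1 ?_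
    rw [← mul_inv_cancel₀ hp]
    exact mul_le_mul_left (spanSingleton_le_iff_mem.2 hγp) _
  have hc0 : c ≠ 0 := by
    rintro rfl
    have : spanSingleton (nonZeroDivisors R) γ * p⁻¹ ≠ 0 :=
      mul_ne_zero (spanSingleton_ne_zero_iff.2 hγne) (inv_ne_zero hp)
    apply this; rw [← hc]; simp
  obtain ⟨d₀, hd₀⟩ := (mem_one_iff _).1 hδ₀
  have hcop : c ⊔ Ideal.span {d₀} ⊔ n = ⊤ := by
    by_contra hne
    obtain ⟨P, hP, hle⟩ := Ideal.exists_le_maximal _ hne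
    have hcP : c ≤ P := (le_sup_left.trans le_sup_left).trans hle
    have hdP : d₀ ∈ P := hle (le_sup_left (b := n)
      (le_sup_right (a := c) (Ideal.mem_span_singleton_self _)))
    have hnP : n ≤ P := le_sup_right.trans hle
    set Q : FractionalIdeal (nonZeroDivisors R) K := (P : FractionalIdeal (nonZeroDivisors R) K) with hQ
    have hQ0 : Q ≠ 0 := coeIdeal_ne_zero.2 fun h => hn (le_bot_iff.1 (h ▸ hnP))
    have hNQ : N ≤ Q := (coeIdeal_le_coeIdeal K).2 hnP
    have hγQ : s * x₁ ∈ Q * p := by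
      have h1 : γ ∈ Q * p := by
        have : spanSingleton (nonZeroDivisors R) γ ≤ Q * p := by
          calc spanSingleton (nonZeroDivisors R) γ = (c : FractionalIdeal _ K) * p := by
                rw [hc, mul_assoc, inv_mul_cancel₀ hp, mul_one]
            _ ≤ Q * p := mul_le_mul_left ((coeIdeal_le_coeIdeal K).2 hcP) p
        exact this (mem_spanSingleton_self _ γ)
      have h2 := sub_mem' _ h1 (mul_le_mul_left hNQ p hγ)
      simpa using h2
    have hδQ : s * x₂ ∈ Q := by
      rw [← hd₀]; exact (mem_coeIdeal _).2 ⟨d₀, hdP, rfl⟩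
    have hqQ : q * Q⁻¹ ≤ b := mul_le_mul_right ((FractionalIdeal.inv_le_inv_iff hQ0 hN0).2 hNQ) q
    -- The order of `(γ₀, δ₀)` modulo `M` then makes `𝔮P⁻¹ ≤ 𝔮`, which is absurd.
    have hcontra : q * Q⁻¹ ≤ q := by
      intro y hy
      have hyb := hqQ hy
      obtain ⟨r, hr⟩ := (mem_one_iff _).1 (hsb y hyb)
      have hrn : r ∈ n := by
        rw [hx, hr]
        constructor
        · have := mul_mem_mul hy hγQ
          rw [show q * Q⁻¹ * (Q * p) = q * p * (Q⁻¹ * Q) by ring, inv_mul_cancel₀ hQ0, mul_one]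
            at this
          rwa [mul_assoc]
        · have := mul_mem_mul hy hδQ
          rw [mul_assoc q, inv_mul_cancel₀ hQ0, mul_one] at this
          rwa [mul_assoc]
      have hysN : y * s ∈ N := by rw [← hr]; exact (mem_coeIdeal _).2 ⟨r, hrn, rfl⟩
      have h1 : spanSingleton (nonZeroDivisors R) y ≤ q := by
        calc spanSingleton (nonZeroDivisors R) y
            = spanSingleton _ y * (spanSingleton _ s * b + N) := by rw [hs, mul_one]
          _ = b * spanSingleton _ (y * s) + spanSingleton _ y * N := by
              rw [← spanSingleton_mul_spanSingleton]; ring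
          _ ≤ b * N + b * N := add_le_add
              (mul_le_mul_right (spanSingleton_le_iff_mem.2 hysN) b)
              (mul_le_mul_left (spanSingleton_le_iff_mem.2 hyb) N)
          _ = q := by rw [hbN]; exact sup_idem q
      exact h1 (mem_spanSingleton_self _ y)
    have h1Q : (1 : FractionalIdeal (nonZeroDivisors R) K) ≤ Q := by
      calc 1 = q * Q⁻¹ * (q⁻¹ * Q) := by
            rw [show q * Q⁻¹ * (q⁻¹ * Q) = (q * q⁻¹) * (Q * Q⁻¹) by ring, mul_inv_cancel₀ hq,
              mul_inv_cancel₀ hQ0, mul_one]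
        _ ≤ q * (q⁻¹ * Q) := mul_le_mul_left hcontra _
        _ = Q := by rw [← mul_assoc, mul_inv_cancel₀ hq, one_mul]
    rw [hQ, ← coeIdeal_top, coeIdeal_le_coeIdeal K] at h1Q
    exact hP.ne_top (top_le_iff.1 h1Q)
  obtain ⟨t, ht, htop⟩ := exists_add_coprime c n hc0 d₀ hcop
  have h1 : (1 : R) ∈ c ⊔ Ideal.span {d₀ + t} := by rw [htop]; trivial
  obtain ⟨e, he, f, hf, hef⟩ := Submodule.mem_sup.1 h1
  obtain ⟨a₀, rfl⟩ := Ideal.mem_span_singleton'.1 hf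
  have heK : algebraMap R K e ∈ spanSingleton (nonZeroDivisors R) γ * p⁻¹ := by
    rw [← hc]; exact (mem_coeIdeal _).2 ⟨e, he, rfl⟩
  obtain ⟨β, hβ, hβe⟩ := (le_spanSingleton_mul_iff.1 (le_refl _)) _ heK
  set α := algebraMap R K a₀ with hα
  set δ := algebraMap R K (d₀ + t) with hδ
  have hα1 : α ∈ (1 : FractionalIdeal (nonZeroDivisors R) K) := (mem_one_iff _).2 ⟨_, rfl⟩
  have hδ1 : δ ∈ (1 : FractionalIdeal (nonZeroDivisors R) K) := (mem_one_iff _).2 ⟨_, rfl⟩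
  have hδN : δ - s * x₂ ∈ N := by
    rw [hδ, ← hd₀, map_add, add_sub_cancel_left]; exact (mem_coeIdeal _).2 ⟨t, ht, rfl⟩
  have hdet : γ * β + α * δ = 1 := by
    rw [hβe, hα, hδ, ← map_mul, ← map_add, hef, map_one]
  have mulβ : ∀ x ∈ q * p, x * β ∈ q := fun x hx => by
    have := mul_mem_mul hx hβ
    rwa [mul_assoc q, mul_inv_cancel₀ hp, mul_one] at this
  have mulγ : ∀ y ∈ q, y * γ ∈ q * p := fun y hy => mul_mem_mul hy hγp
  have part1 : ∀ a b : K, (a ∈ q * p ∧ b ∈ q) →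
        ∃ x ∈ q * p, ∃ y ∈ q, a = x * α + y * γ ∧ b = x * (-β) + y * δ := by
    rintro a b ⟨ha, hb⟩
    refine ⟨a * δ - b * γ, sub_mem' _ (one_mul' _ ha hδ1) (mulγ b hb),
      a * β + b * α, add_mem' _ (mulβ a ha) (one_mul' _ hb hα1), ?_, ?_⟩
    · linear_combination (-a) * hdet
    · linear_combination (-b) * hdet
  refine ⟨α, -β, γ, δ, by linear_combination hdet, fun a b => ⟨part1 a b, ?_⟩,
    fun a b' => ⟨?_, ?_⟩⟩
  · rintro ⟨x, hx', y, hy, rfl, rfl⟩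
    refine ⟨add_mem' _ (one_mul' _ hx' hα1) (mulγ y hy), ?_⟩
    have := sub_mem' _ (one_mul' _ hy hδ1) (mulβ x hx')
    convert this using 1; ring
  · rintro ⟨r, hr1, hr2⟩
    have hr : algebraMap R K r ∈ spanSingleton (nonZeroDivisors R) s * b + N := by
      rw [hs]; exact (mem_one_iff _).2 ⟨r, rfl⟩
    obtain ⟨w, hw, m, hm, hwm⟩ := (mem_add _ _ _).1 hr
    obtain ⟨y, hy, rfl⟩ := (le_spanSingleton_mul_iff.1 (le_refl _)) _ hw
    have e1 : a - y * γ ∈ q * p := by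
      have h2 := mul_mem_mul hy hγ
      rw [← mul_assoc, hbN] at h2
      have := sub_mem' _ (add_mem' _ hr1 (hxN m hm).1) h2
      convert this using 1
      rw [← hwm]; ring
    have e2 : b' - y * δ ∈ q := by
      have h2 := mul_mem_mul hy hδN
      rw [hbN] at h2
      have := sub_mem' _ (add_mem' _ hr2 (hxN m hm).2) h2
      convert this using 1
      rw [← hwm]; ring
    obtain ⟨x, hx', y', hy', h3, h4⟩ := part1 _ _ ⟨e1, e2⟩
    exact ⟨x, hx', y' + y, add_mem' _ (hqb hy') hy, by linear_combination h3,
      by linear_combination h4⟩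
  · rintro ⟨x, hx', y, hy, rfl, rfl⟩
    obtain ⟨r, hr⟩ := (mem_one_iff _).1 (hsb y hy)
    refine ⟨r, ?_, ?_⟩
    · have h2 := mul_mem_mul hy hγ
      rw [← mul_assoc, hbN] at h2
      have := add_mem' _ (one_mul' _ hx' hα1) h2
      convert this using 1
      rw [hr]; ring
    · have h2 := mul_mem_mul hy hδN
      rw [hbN] at h2
      have := sub_mem' _ h2 (mulβ x hx')
      convert this using 1
      rw [hr]; ring

/-- An `R`-linear map from a nonzero fractional ideal to a `K`-vector space is multiplication by
a vector. -/
lemma exists_eq_smul_of_linearMap {E : Type*} [AddCommGroup E] [Module R E] [Module K E]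
    [IsScalarTower R K E] (I : FractionalIdeal (nonZeroDivisors R) K) (hI : I ≠ 0)
    (f : (I : Submodule R K) →ₗ[R] E) : ∃ u : E, ∀ x : (I : Submodule R K), f x = (x : K) • u := by
  obtain ⟨z, hz, hzI⟩ := FractionalIdeal.exists_ne_zero_mem_isInteger hI
  have hz' : algebraMap R K z ≠ 0 := by simpa using hz
  refine ⟨(algebraMap R K z)⁻¹ • f ⟨algebraMap R K z, hzI⟩, fun x => ?_⟩
  obtain ⟨a, d, hd, hx⟩ := IsFractionRing.div_surjective (A := R) (x : K)
  have hd' : algebraMap R K d ≠ 0 := by simpa using nonZeroDivisors.ne_zero hd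
  have h1 : (d * z) • x = a • (⟨algebraMap R K z, hzI⟩ : (I : Submodule R K)) := by
    apply Subtype.ext
    rw [Submodule.coe_smul, Submodule.coe_smul, ← hx, Algebra.smul_def, Algebra.smul_def, map_mul]
    field_simp
  have h2 := congrArg f h1
  rw [map_smul, map_smul, ← algebraMap_smul K (d * z), ← algebraMap_smul K a, map_mul] at h2
  rw [← hx, smul_smul]
  apply smul_right_injective E (mul_ne_zero hd' hz')
  show _ • _ = _ • _
  rw [h2, smul_smul]
  congr 1
  field_simp

end Dedekind

/-! ### Lattices in coordinates -/

section Lattice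

variable {K : Type*} [Field K] [NumberField K]

lemma vecMul_algebraMap (U : Matrix (Fin 2) (Fin 2) (K ⊗[ℚ] ℝ)) (x y : K) :
    Matrix.vecMul ![algebraMap K (K ⊗[ℚ] ℝ) x, algebraMap K (K ⊗[ℚ] ℝ) y] U =
      x • U 0 + y • U 1 := by
  ext j
  simp [Matrix.vecMul, dotProduct, Fin.sum_univ_two, Algebra.smul_def]

lemma mem_latMap_fracPair (U : Matrix (Fin 2) (Fin 2) (K ⊗[ℚ] ℝ))
    (a b : FractionalIdeal (nonZeroDivisors (𝓞 K)) K) (v : Fin 2 → K ⊗[ℚ] ℝ) :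
    v ∈ latMap K U (fracPair K a b) ↔ ∃ x ∈ a, ∃ y ∈ b, v = x • U 0 + y • U 1 := by
  constructor
  · rintro ⟨w, hw, rfl⟩
    obtain ⟨x, hx, hx'⟩ := hw 0 trivial
    obtain ⟨y, hy, hy'⟩ := hw 1 trivial
    refine ⟨x, hx, y, hy, ?_⟩
    rw [← vecMul_algebraMap]
    have : w = ![algebraMap K (K ⊗[ℚ] ℝ) x, algebraMap K (K ⊗[ℚ] ℝ) y] := by
      ext i; fin_cases i
      · exact hx'.symm
      · exact hy'.symm
    rw [← this]; rfl
  · rintro ⟨x, hx, y, hy, rfl⟩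
    refine ⟨![algebraMap K (K ⊗[ℚ] ℝ) x, algebraMap K (K ⊗[ℚ] ℝ) y], ?_,
      vecMul_algebraMap U x y⟩
    intro i _
    fin_cases i
    · exact ⟨x, hx, rfl⟩
    · exact ⟨y, hy, rfl⟩

end Lattice

/-- Every modular point for `Γ₀(𝔫)` admits an admissible basis matrix: if `(L, L')` is a
pair of lattices with `L ⊆ L'` and `L'/L ≅ 𝓞_K/𝔫`, and `L ≅ 𝔭𝔮 ⊕ 𝔮` as `𝓞_K`-modules, then
there is `U ∈ GL(2, K̂)` with `L = (𝔮(𝔭 ⊕ 𝓞_K))·U` and `L' = (𝔮(𝔭 ⊕ 𝔫⁻¹))·U`. -/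
theorem modular_point_has_admissible_basis
    {K : Type*} [Field K] [NumberField K] (n : Ideal (𝓞 K)) (hn : n ≠ 0)
    (L L' : Submodule (𝓞 K) (Fin 2 → K ⊗[ℚ] ℝ))
    (hL : IsLattice K L) (hL' : IsLattice K L') (hLL' : L ≤ L')
    (hquot : Nonempty ((↥L' ⧸ Submodule.comap L'.subtype L) ≃ₗ[𝓞 K] (𝓞 K ⧸ n)))
    (p q : FractionalIdeal (nonZeroDivisors (𝓞 K)) K) (hp : p ≠ 0) (hq : q ≠ 0)
    (hiso : Nonempty (↥L ≃ₗ[𝓞 K]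
      (↥((p * q : FractionalIdeal (nonZeroDivisors (𝓞 K)) K) : Submodule (𝓞 K) K) ×
       ↥((q : FractionalIdeal (nonZeroDivisors (𝓞 K)) K) : Submodule (𝓞 K) K)))) :
    ∃ U : GL (Fin 2) (K ⊗[ℚ] ℝ),
      L = latMap K (U : Matrix (Fin 2) (Fin 2) (K ⊗[ℚ] ℝ)) (fracPair K (q * p) q) ∧
      L' = latMap K (U : Matrix (Fin 2) (Fin 2) (K ⊗[ℚ] ℝ))
        (fracPair K (q * p) (q * (n : FractionalIdeal (nonZeroDivisors (𝓞 K)) K)⁻¹)) := by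
  obtain ⟨e⟩ := hquot
  obtain ⟨φ⟩ := hiso
  obtain ⟨u₁, hu₁⟩ := exists_eq_smul_of_linearMap (p * q) (mul_ne_zero hp hq)
    (L.subtype ∘ₗ φ.symm.toLinearMap ∘ₗ LinearMap.inl (𝓞 K) _ _)
  obtain ⟨u₂, hu₂⟩ := exists_eq_smul_of_linearMap q hq
    (L.subtype ∘ₗ φ.symm.toLinearMap ∘ₗ LinearMap.inr (𝓞 K) _ _)
  have hsymm : ∀ x y, (φ.symm (x, y) : Fin 2 → K ⊗[ℚ] ℝ) = (x : K) • u₁ + (y : K) • u₂ := by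
    intro x y
    rw [← hu₁, ← hu₂]
    have : (x, y) = LinearMap.inl (𝓞 K) _ _ x + LinearMap.inr (𝓞 K) _ _ y := by simp
    rw [this, map_add]
    rfl
  have memL : ∀ v, v ∈ L ↔ ∃ x ∈ q * p, ∃ y ∈ q, v = x • u₁ + y • u₂ := by
    intro v
    rw [mul_comm q p]
    constructor
    · intro hv
      refine ⟨(φ ⟨v, hv⟩).1, (φ ⟨v, hv⟩).1.2, (φ ⟨v, hv⟩).2, (φ ⟨v, hv⟩).2.2, ?_⟩
      rw [← hsymm]
      simp
    · rintro ⟨x, hx, y, hy, rfl⟩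
      have := hsymm ⟨x, hx⟩ ⟨y, hy⟩
      simp only at this
      rw [← this]
      exact (φ.symm (⟨x, hx⟩, ⟨y, hy⟩)).2
  set V : Matrix (Fin 2) (Fin 2) (K ⊗[ℚ] ℝ) := Matrix.of ![u₁, u₂] with hV
  have hVu : ∀ x y : K, Matrix.vecMul ![algebraMap K (K ⊗[ℚ] ℝ) x, algebraMap K (K ⊗[ℚ] ℝ) y] V =
      x • u₁ + y • u₂ := fun x y => vecMul_algebraMap V x y
  -- `L` spans `K̂²` over `K̂`, so the rows of `V` do as well.
  have hVunit : IsUnit V := by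
    rw [← Matrix.vecMul_surjective_iff_isUnit]
    have : LinearMap.range (Matrix.vecMulLinear V) = ⊤ := by
      rw [eq_top_iff, ← hL.2.1, Submodule.span_le]
      intro v hv
      obtain ⟨x, -, y, -, rfl⟩ := (memL v).1 hv
      exact ⟨_, hVu x y⟩
    exact LinearMap.range_eq_top.1 this
  have hinj : ∀ x y x' y' : K, x • u₁ + y • u₂ = x' • u₁ + y' • u₂ → x = x' ∧ y = y' := by
    intro x y x' y' h
    rw [← hVu, ← hVu] at h
    have h' := Matrix.vecMul_injective_of_isUnit hVunit h
    have hK := (algebraMap K (K ⊗[ℚ] ℝ)).injective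
    exact ⟨hK (by simpa using congrFun h' 0), hK (by simpa using congrFun h' 1)⟩
  have memL2 : ∀ x y : K, x • u₁ + y • u₂ ∈ L ↔ x ∈ q * p ∧ y ∈ q := by
    intro x y
    rw [memL]
    constructor
    · rintro ⟨x', hx', y', hy', h⟩
      obtain ⟨rfl, rfl⟩ := hinj _ _ _ _ h
      exact ⟨hx', hy'⟩
    · rintro ⟨h1, h2⟩
      exact ⟨x, h1, y, h2, rfl⟩
  -- `m` lifts a generator of the cyclic module `L'/L`.
  obtain ⟨m, hm⟩ := Submodule.Quotient.mk_surjective _ (e.symm 1)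
  have hmk : ∀ r : 𝓞 K, e (Submodule.Quotient.mk (r • m)) = Ideal.Quotient.mk n r := by
    intro r
    rw [Submodule.Quotient.mk_smul, map_smul, hm, LinearEquiv.apply_symm_apply]
    rw [Algebra.smul_def, mul_one]
    rfl
  have hmn : ∀ r : 𝓞 K, r • (m : Fin 2 → K ⊗[ℚ] ℝ) ∈ L ↔ r ∈ n := by
    intro r
    rw [← Ideal.Quotient.eq_zero_iff_mem, ← hmk, LinearEquiv.map_eq_zero_iff,
      Submodule.Quotient.mk_eq_zero]
    rfl
  have memL' : ∀ v, v ∈ L' ↔ ∃ r : 𝓞 K, v - r • (m : Fin 2 → K ⊗[ℚ] ℝ) ∈ L := by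
    intro v
    constructor
    · intro hv
      obtain ⟨r, hr⟩ := Ideal.Quotient.mk_surjective (e (Submodule.Quotient.mk ⟨v, hv⟩))
      rw [← hmk] at hr
      have := (Submodule.Quotient.eq _).1 (e.injective hr).symm
      exact ⟨r, this⟩
    · rintro ⟨r, hr⟩
      have := L'.add_mem (hLL' hr) (L'.smul_mem r m.2)
      simpa using this
  -- `n·m ⊆ L` with `n ≠ 0`, so `m` has coordinates in `K`.
  obtain ⟨x₁, x₂, hmx⟩ : ∃ x₁ x₂ : K, (m : Fin 2 → K ⊗[ℚ] ℝ) = x₁ • u₁ + x₂ • u₂ := by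
    obtain ⟨t, ht, ht0⟩ := Submodule.exists_mem_ne_zero_of_ne_bot hn
    have ht0' : algebraMap (𝓞 K) K t ≠ 0 := by simpa using ht0
    obtain ⟨x, -, y, -, h⟩ := (memL _).1 ((hmn t).2 ht)
    refine ⟨(algebraMap (𝓞 K) K t)⁻¹ * x, (algebraMap (𝓞 K) K t)⁻¹ * y, ?_⟩
    rw [mul_smul, mul_smul, ← smul_add, ← h, ← algebraMap_smul K t, smul_smul,
      inv_mul_cancel₀ ht0', one_smul]
  have hrm : ∀ r : 𝓞 K, r • (m : Fin 2 → K ⊗[ℚ] ℝ) =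
      (algebraMap (𝓞 K) K r * x₁) • u₁ + (algebraMap (𝓞 K) K r * x₂) • u₂ := by
    intro r
    rw [hmx, ← algebraMap_smul K r, smul_add, smul_smul, smul_smul]
  obtain ⟨α, β, γ, δ, hdet, h1, h2⟩ := exists_adapted_matrix p q hp hq n hn x₁ x₂ (fun r => by
    rw [← hmn, hrm, memL2])
  set A : Matrix (Fin 2) (Fin 2) K := !![α, β; γ, δ] with hA
  have hAunit : IsUnit (A.map (algebraMap K (K ⊗[ℚ] ℝ))) := by
    have : IsUnit A := by
      rw [Matrix.isUnit_iff_isUnit_det, hA, Matrix.det_fin_two_of, hdet]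
      exact isUnit_one
    exact this.map (algebraMap K (K ⊗[ℚ] ℝ)).mapMatrix
  obtain ⟨U, hU⟩ := hAunit.mul hVunit
  have hU0 : (U : Matrix (Fin 2) (Fin 2) (K ⊗[ℚ] ℝ)) 0 = α • u₁ + β • u₂ := by
    rw [hU]
    ext j
    simp [hA, hV, Matrix.mul_apply, Fin.sum_univ_two, Algebra.smul_def]
  have hU1 : (U : Matrix (Fin 2) (Fin 2) (K ⊗[ℚ] ℝ)) 1 = γ • u₁ + δ • u₂ := by
    rw [hU]
    ext j
    simp [hA, hV, Matrix.mul_apply, Fin.sum_univ_two, Algebra.smul_def]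
  have hcomb : ∀ x y : K, x • (U : Matrix (Fin 2) (Fin 2) (K ⊗[ℚ] ℝ)) 0 +
      y • (U : Matrix (Fin 2) (Fin 2) (K ⊗[ℚ] ℝ)) 1 =
      (x * α + y * γ) • u₁ + (x * β + y * δ) • u₂ := by
    intro x y
    rw [hU0, hU1]
    module
  refine ⟨U, ?_, ?_⟩
  · ext v
    rw [mem_latMap_fracPair, memL]
    simp only [hcomb]
    constructor
    · rintro ⟨a, ha, b, hb, rfl⟩
      obtain ⟨x, hx, y, hy, rfl, rfl⟩ := (h1 a b).1 ⟨ha, hb⟩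
      exact ⟨x, hx, y, hy, rfl⟩
    · rintro ⟨x, hx, y, hy, rfl⟩
      obtain ⟨ha, hb⟩ := (h1 _ _).2 ⟨x, hx, y, hy, rfl, rfl⟩
      exact ⟨_, ha, _, hb, rfl⟩
  · have hdiff : ∀ (a b : K) (r : 𝓞 K), a • u₁ + b • u₂ - r • (m : Fin 2 → K ⊗[ℚ] ℝ) =
        (a - algebraMap (𝓞 K) K r * x₁) • u₁ + (b - algebraMap (𝓞 K) K r * x₂) • u₂ := by
      intro a b r
      rw [hrm]
      module
    ext v
    rw [mem_latMap_fracPair, memL']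
    simp only [hcomb]
    constructor
    · rintro ⟨r, hr⟩
      obtain ⟨a, ha, b, hb, hab⟩ := (memL _).1 hr
      have hv : v = (a + algebraMap (𝓞 K) K r * x₁) • u₁ +
          (b + algebraMap (𝓞 K) K r * x₂) • u₂ := by
        rw [sub_eq_iff_eq_add.1 hab, hrm]
        module
      obtain ⟨x, hx, y, hy, e1, e2⟩ := (h2 (a + algebraMap (𝓞 K) K r * x₁)
        (b + algebraMap (𝓞 K) K r * x₂)).1 ⟨r, by simpa using ha, by simpa using hb⟩
      exact ⟨x, hx, y, hy, by rw [hv, e1, e2]⟩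
    · rintro ⟨x, hx, y, hy, rfl⟩
      obtain ⟨r, hr1, hr2⟩ := (h2 _ _).2 ⟨x, hx, y, hy, rfl, rfl⟩
      exact ⟨r, by rw [hdiff, memL2]; exact ⟨hr1, hr2⟩⟩
end
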